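/- arXiv:2012.00311 — 5 statements merged into one kernel-verified Lean document; each statement's English description precedes it below -/
import Mathlib

section
/- Let G be a finite connected simple graph on n ≥ 3 vertices. G admits a feasible agency of strength α = 1 (equivalently, a feasible agency with k = n agents and time horizon T = n) if and only if G has a Hamiltonian cycle. -/
open SimpleGraph

/-- A walk with parking of time horizon `T` that visits every vertex and returns
to its starting vertex: a (traveling salesman) tour. -/
def AgencyTour {V : Type*} (G : SimpleGraph V) (T : ℕ) (a : ℕ → V) : Prop :=
  (∀ t < T, a t = a (t + 1) ∨ G.Adj (a t) (a (t + 1))) ∧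
  (∀ v : V, ∃ t ≤ T, a t = v) ∧
  a 0 = a T

/-- A feasible agency with `k` agents and time horizon `T`: each agent performs a
tour (with parking), and no two distinct agents crash in a node or in an edge. -/
def FeasibleAgency {V : Type*} (G : SimpleGraph V) (k T : ℕ) (a : Fin k → ℕ → V) : Prop :=
  (∀ i, AgencyTour G T (a i)) ∧
  ∀ i j : Fin k, i ≠ j →
    (∀ t ≤ T, a i t ≠ a j t) ∧
    (∀ t < T, ¬(a i t = a j (t + 1) ∧ a i (t + 1) = a j t ∧ a i t ≠ a i (t + 1)))

/-!
Around a Hamiltonian cycle, agents started at distinct vertices can all travel at unit speed in the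
same direction, so they never meet in a node, and they do not swap places because `n ≥ 3`.
Conversely, a tour of time horizon `n` has only `n` positions up to its return to the start, so it
visits every vertex exactly once; hence it never parks and closes up to a Hamiltonian cycle. A
single agent is enough for this direction.
-/

section ClosedSequence

variable {α : Type*} {s : ℕ → α} {n : ℕ}

theorem apply_val_natCast_of_le (hs : s 0 = s n) {t : ℕ} (ht : t ≤ n) :
    s (t : ZMod n).val = s t := by
  rcases ht.lt_or_eq with hlt | rfl
  · rw [ZMod.val_natCast_of_lt hlt]
  · rw [ZMod.natCast_self, ZMod.val_zero, hs]

theorem apply_val_add_one [NeZero n] (hs : s 0 = s n) (x : ZMod n) :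
    s (x + 1).val = s (x.val + 1) := by
  have hx : ((x.val + 1 : ℕ) : ZMod n) = x + 1 := by
    rw [Nat.cast_succ, ZMod.natCast_zmod_val]
  rw [← hx, apply_val_natCast_of_le hs x.val_lt]

end ClosedSequence

section CyclicSequence

variable {V : Type*} {G : SimpleGraph V}

theorem cycleGraph_isContained_iff_exists_zmod {n : ℕ} (hn : 2 ≤ n) :
    cycleGraph n ⊑ G ↔
      ∃ c : ZMod n → V, Function.Injective c ∧ ∀ x, G.Adj (c x) (c (x + 1)) := by
  -- `ZMod (m + 2)` unfolds to `Fin (m + 2)`, the vertex type of `cycleGraph (m + 2)`.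
  obtain ⟨m, rfl⟩ := Nat.exists_eq_add_of_le' hn
  constructor
  · rintro ⟨f⟩
    exact ⟨f, f.injective, fun x ↦ f.toHom.map_adj
      (cycleGraph_adj.2 (.inr (add_sub_cancel_left (G := ZMod (m + 2)) x 1)))⟩
  · rintro ⟨c, hinj, hadj⟩
    have hstep {x y : ZMod (m + 2)} (hxy : y - x = 1) : G.Adj (c x) (c y) := by
      simpa only [← hxy, add_sub_cancel] using hadj x
    exact ⟨⟨⟨c, fun {_ _} h ↦ (cycleGraph_adj.1 h).elim (fun h ↦ (hstep h).symm) hstep⟩, hinj⟩⟩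

theorem exists_isHamiltonianCycle_iff_exists_zmod [Fintype V] [DecidableEq V]
    (hn : 3 ≤ Fintype.card V) :
    (∃ (v : V) (p : G.Walk v v), p.IsHamiltonianCycle) ↔
      ∃ c : ZMod (Fintype.card V) → V, Function.Injective c ∧ ∀ x, G.Adj (c x) (c (x + 1)) := by
  simp only [Walk.isHamiltonianCycle_iff_isCycle_and_length_eq]
  rw [← cycleGraph_isContained_iff hn, cycleGraph_isContained_iff_exists_zmod (by lia)]

end CyclicSequence

namespace AgencyTour

variable {V : Type*} {G : SimpleGraph V} {a : ℕ → V}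

theorem surjective_comp_val {T : ℕ} (h : AgencyTour G T a) :
    Function.Surjective fun x : ZMod T ↦ a x.val := by
  intro v
  obtain ⟨t, ht, rfl⟩ := h.2.1 v
  exact ⟨t, apply_val_natCast_of_le h.2.2 ht⟩

variable [Fintype V]

theorem injective_comp_val (h : AgencyTour G (Fintype.card V) a) :
    Function.Injective fun x : ZMod (Fintype.card V) ↦ a x.val := by
  have : Nonempty V := ⟨a 0⟩
  refine (h.surjective_comp_val.bijective_of_nat_card_le ?_).injective
  rw [Nat.card_zmod, Nat.card_eq_fintype_card]

theorem adj_comp_val [Nontrivial V] (h : AgencyTour G (Fintype.card V) a)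
    (x : ZMod (Fintype.card V)) : G.Adj (a x.val) (a (x + 1).val) := by
  have : Fact (1 < Fintype.card V) := ⟨Fintype.one_lt_card⟩
  have hmoves : a x.val ≠ a (x + 1).val := fun he ↦
    one_ne_zero (left_eq_add.1 (h.injective_comp_val he))
  rw [apply_val_add_one h.2.2] at hmoves ⊢
  exact (h.1 x.val x.val_lt).resolve_left hmoves

end AgencyTour

section RotatingAgency

variable {V : Type*} {G : SimpleGraph V} {n : ℕ} {c : ZMod n → V}

/-- The agency in which `k` agents follow the cyclic sequence `c` at unit speed, agent `i` starting
at position `i`. The cast to `ZMod n` reads all positions cyclically. -/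
def rotatingAgency (c : ZMod n → V) (k : ℕ) (i : Fin k) (t : ℕ) : V :=
  c (i.val + t)

theorem agencyTour_rotatingAgency [NeZero n] (hc : Function.Surjective c)
    (hadj : ∀ x, G.Adj (c x) (c (x + 1))) {k : ℕ} (i : Fin k) :
    AgencyTour G n (rotatingAgency c k i) := by
  refine ⟨fun t _ ↦ .inr ?_, fun v ↦ ?_, ?_⟩
  · simpa only [rotatingAgency, Nat.cast_succ, add_assoc] using hadj (i.val + t)
  · obtain ⟨x, rfl⟩ := hc v
    refine ⟨(x - i.val).val, (ZMod.val_lt _).le, ?_⟩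
    rw [rotatingAgency, ZMod.natCast_zmod_val, add_sub_cancel]
  · simp only [rotatingAgency, Nat.cast_zero, ZMod.natCast_self]

theorem rotatingAgency_injective (hc : Function.Injective c) {k : ℕ} (hk : k ≤ n) (t : ℕ) :
    Function.Injective fun i ↦ rotatingAgency c k i t := by
  intro i j hij
  have hmod : i.val ≡ j.val [MOD n] :=
    (ZMod.natCast_eq_natCast_iff _ _ _).1 (add_right_cancel (hc hij))
  exact Fin.ext (hmod.eq_of_lt_of_lt (i.isLt.trans_le hk) (j.isLt.trans_le hk))

theorem rotatingAgency_not_swap (hc : Function.Injective c) (hn : 3 ≤ n) {k : ℕ} (i j : Fin k)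
    (t : ℕ) : ¬(rotatingAgency c k i t = rotatingAgency c k j (t + 1) ∧
      rotatingAgency c k i (t + 1) = rotatingAgency c k j t) := by
  rintro ⟨hij, hji⟩
  have hij' : (i.val + t : ZMod n) = j.val + (t + 1 : ℕ) := hc hij
  have hji' : (i.val + (t + 1 : ℕ) : ZMod n) = j.val + t := hc hji
  have htwo : ((2 : ℕ) : ZMod n) = 0 := by
    push_cast at hij' hji' ⊢
    linear_combination hji' - hij'
  exact Nat.not_dvd_of_pos_of_lt two_pos hn ((ZMod.natCast_eq_zero_iff _ _).1 htwo)

theorem feasibleAgency_rotatingAgency (hn : 3 ≤ n) (hc : Function.Bijective c)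
    (hadj : ∀ x, G.Adj (c x) (c (x + 1))) {k : ℕ} (hk : k ≤ n) :
    FeasibleAgency G k n (rotatingAgency c k) := by
  have : NeZero n := ⟨by lia⟩
  refine ⟨agencyTour_rotatingAgency hc.surjective hadj,
    fun i j hij ↦ ⟨fun t _ ↦ ?_, fun t _ h ↦ ?_⟩⟩
  · exact (rotatingAgency_injective hc.injective hk t).ne hij
  · exact rotatingAgency_not_swap hc.injective hn i j t ⟨h.1, h.2.1⟩

end RotatingAgency

theorem stmt0_general {V : Type*} [Fintype V] [DecidableEq V] (G : SimpleGraph V)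
    (hn : 3 ≤ Fintype.card V) {k : ℕ} (hk₀ : 0 < k) (hk : k ≤ Fintype.card V) :
    (∃ a : Fin k → ℕ → V, FeasibleAgency G k (Fintype.card V) a) ↔
      ∃ (v : V) (p : G.Walk v v), p.IsHamiltonianCycle := by
  rw [exists_isHamiltonianCycle_iff_exists_zmod hn]
  constructor
  · rintro ⟨a, htour, -⟩
    have : Nontrivial V := Fintype.one_lt_card_iff_nontrivial.1 (by lia)
    have h := htour ⟨0, hk₀⟩
    exact ⟨_, h.injective_comp_val, h.adj_comp_val⟩
  · rintro ⟨c, hinj, hadj⟩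
    have hc : Function.Bijective c := hinj.bijective_of_nat_card_le (by simp)
    exact ⟨_, feasibleAgency_rotatingAgency hn hc hadj hk⟩

/-- a connected graph on `n ≥ 3` vertices admits a feasible agency of
strength 1, i.e. with `k = n` agents and time horizon `T = n`, iff it has a
Hamiltonian cycle. -/
theorem stmt0 {V : Type*} [Fintype V] [DecidableEq V] (G : SimpleGraph V)
    (hconn : G.Connected) (hn : 3 ≤ Fintype.card V) :
    (∃ a : Fin (Fintype.card V) → ℕ → V,
        FeasibleAgency G (Fintype.card V) (Fintype.card V) a) ↔
      ∃ (v : V) (p : G.Walk v v), p.IsHamiltonianCycle := by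
  exact stmt0_general G hn (by lia) le_rfl
end

section
/- For every positive integer r there exists a tree on n = 7r + 6 vertices that admits a feasible agency with time horizon T = 16r + 12 and k = 4r + 3 agents; in particular there are arbitrarily large trees admitting a feasible agency with T/k = 4 (with T = (16n − 12)/7 and k = (4n − 3)/7). -/
open SimpleGraph

/-! One tour serves all agents. If its time horizon `ℓ` satisfies `ℓ + 1 = d * k`, let agent `i`
perform it, closed up by one step of parking, with a head start of `d * i` time steps. Then no two
agents crash as soon as the tour does not meet itself at times congruent modulo `d`.

Such tours are built by grafting: perform a tour of one tree, cross a new edge, perform a tour of a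
second tree, and cross back. The result is again crash-free modulo `d` if the two crossings of the
new edge happen at incongruent times and the time of return has a residue modulo `d` at which the
starting vertex has not been occupied before. For `d = 4`, each spine vertex is grafted with a
cherry (a vertex with two leaves), then the previous spine, then another cherry; this adds `7`
vertices and `16` time steps. A last vertex carrying a leaf, the spine and a second leaf completes
the tree. -/

section Trees

variable {V W : Type*} {G : SimpleGraph V} {H : SimpleGraph W}

theorem exists_map_sumInl_eq {u v : V} :
    ∀ p : (G ⊕g H).Walk (.inl u) (.inl v), ∃ q : G.Walk u v, q.map Embedding.sumInl.toHom = p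
  | .nil => ⟨.nil, rfl⟩
  | .cons (v := .inl z) h p => by
    obtain ⟨q, rfl⟩ := exists_map_sumInl_eq p
    exact ⟨.cons h q, rfl⟩
  | .cons (v := .inr z) h _ => by simp at h

theorem not_isCycle_sum_inl (hG : G.IsAcyclic) {u : V} (p : (G ⊕g H).Walk (.inl u) (.inl u)) :
    ¬ p.IsCycle := by
  obtain ⟨q, rfl⟩ := exists_map_sumInl_eq p
  exact fun h ↦ hG q h.of_map

theorem isAcyclic_sum (hG : G.IsAcyclic) (hH : H.IsAcyclic) : (G ⊕g H).IsAcyclic := by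
  rintro (u | u) p hp
  · exact not_isCycle_sum_inl hG p hp
  · exact not_isCycle_sum_inl hH (p.map Iso.sumComm.toHom) (hp.map Iso.sumComm.injective)

theorem isTree_sum_sup_edge (hG : G.IsTree) (hH : H.IsTree) (v : V) (w : W) :
    ((G ⊕g H) ⊔ edge (.inl v) (.inr w)).IsTree where
  connected := hG.connected.sum_sup_edge hH.connected
  isAcyclic := (isAcyclic_sum hG.isAcyclic hH.isAcyclic).sup_edge_of_not_reachable
    (not_reachable_sum_inl_inr v w)

end Trees

/-- The walk `w`, observed up to time `T`, never meets a copy of itself launched a multiple of `d`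
time steps earlier or later, neither in a node nor in an edge. -/
structure CrashFreeMod {V : Type*} (d T : ℕ) (w : ℕ → V) : Prop where
  node : ∀ s ≤ T, ∀ t ≤ T, s ≡ t [MOD d] → w s = w t → s = t
  edge : ∀ s < T, ∀ t < T, s ≡ t [MOD d] → w s = w (t + 1) → w (s + 1) = w t → w s = w (s + 1)

section Launch

variable {V W : Type*} {G : SimpleGraph V} {H : SimpleGraph W} {w : ℕ → V} {d k T : ℕ}

theorem AgencyTour.map_iso (hw : AgencyTour G T w) (e : G ≃g H) : AgencyTour H T (e ∘ w) := by
  obtain ⟨hstep, hvisit, hclosed⟩ := hw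
  refine ⟨fun t ht ↦ ?_, fun v ↦ ?_, congrArg e hclosed⟩
  · exact (hstep t ht).imp (congrArg e) e.map_adj_iff.2
  · obtain ⟨t, ht, h⟩ := hvisit (e.symm v)
    exact ⟨t, ht, by simp [h]⟩

theorem CrashFreeMod.comp {f : V → W} (hw : CrashFreeMod d T w) (hf : f.Injective) :
    CrashFreeMod d T (f ∘ w) where
  node s hs t ht hst h := hw.node s hs t ht hst (hf h)
  edge s hs t ht hst h h' := congrArg f (hw.edge s hs t ht hst (hf h) (hf h'))

theorem apply_succ_mod_succ (h : w 0 = w T) (t : ℕ) :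
    t % (T + 1) < T ∧ w ((t + 1) % (T + 1)) = w (t % (T + 1) + 1) ∨
      t % (T + 1) = T ∧ w ((t + 1) % (T + 1)) = w T := by
  rcases (Nat.le_of_lt_succ (t.mod_lt T.succ_pos)).lt_or_eq with ht | ht
  · exact .inl ⟨ht, by rw [← Nat.mod_add_mod, Nat.mod_eq_of_lt (Nat.succ_lt_succ ht)]⟩
  · exact .inr ⟨ht, by rw [← Nat.mod_add_mod, ht, Nat.mod_self, h]⟩

theorem CrashFreeMod.edge_mod_succ (hw : CrashFreeMod d T w) (hclosed : w 0 = w T) {s t : ℕ}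
    (hst : s % (T + 1) ≡ t % (T + 1) [MOD d])
    (h : w (s % (T + 1)) = w ((t + 1) % (T + 1))) (h' : w ((s + 1) % (T + 1)) = w (t % (T + 1))) :
    w (s % (T + 1)) = w ((s + 1) % (T + 1)) := by
  rcases apply_succ_mod_succ hclosed s with ⟨hs, es⟩ | ⟨hs, es⟩
  · rcases apply_succ_mod_succ hclosed t with ⟨ht, et⟩ | ⟨ht, et⟩
    · rw [et] at h
      rw [es] at h' ⊢
      exact hw.edge _ hs _ ht hst h h'
    · rw [h, h', et, ht]
  · rw [es, hs]

theorem AgencyTour.shift (hw : AgencyTour G T w) (c : ℕ) :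
    AgencyTour G (T + 1) fun t ↦ w ((t + c) % (T + 1)) := by
  obtain ⟨hstep, hvisit, hclosed⟩ := hw
  refine ⟨fun t _ ↦ ?_, fun v ↦ ?_, ?_⟩ <;> beta_reduce
  · rw [add_right_comm]
    rcases apply_succ_mod_succ hclosed (t + c) with ⟨ht, h⟩ | ⟨ht, h⟩
    · rw [h]
      exact hstep _ ht
    · exact .inl (by rw [h, ht])
  · obtain ⟨t, ht, rfl⟩ := hvisit v
    have hlt : c % (T + 1) < T + 1 := c.mod_lt T.succ_pos
    refine ⟨(t + (T + 1 - c % (T + 1))) % (T + 1), (Nat.mod_lt _ T.succ_pos).le, ?_⟩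
    have h : t + (T + 1 - c % (T + 1)) + c % (T + 1) = t + (T + 1) := by omega
    rw [Nat.mod_add_mod, ← Nat.add_mod_mod, h, Nat.add_mod_right,
      Nat.mod_eq_of_lt (Nat.lt_succ_of_le ht)]
  · rw [add_comm (T + 1), zero_add, Nat.add_mod_right]

theorem feasibleAgency_of_crashFreeMod (hw : AgencyTour G T w) (hc : CrashFreeMod d T w)
    (hT : T + 1 = d * k) :
    FeasibleAgency G k (T + 1) fun i t ↦ w ((t + d * i) % (T + 1)) := by
  have hmod (i j t : ℕ) : (t + d * i) % (T + 1) ≡ (t + d * j) % (T + 1) [MOD d] := by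
    rw [hT, Nat.ModEq, Nat.mod_mul_right_mod, Nat.mod_mul_right_mod]
    simp
  have hne {i j : Fin k} (hij : i ≠ j) (t : ℕ) :
      w ((t + d * i) % (T + 1)) ≠ w ((t + d * j) % (T + 1)) := by
    intro h
    have heq : t + d * i ≡ t + d * j [MOD d * k] :=
      hT ▸ hc.node _ (Nat.le_of_lt_succ (Nat.mod_lt _ T.succ_pos)) _
        (Nat.le_of_lt_succ (Nat.mod_lt _ T.succ_pos)) (hmod i j t) h
    have hd : d ≠ 0 := by
      rintro rfl
      simp at hT
    exact hij (Fin.ext ((heq.add_left_cancel' t).mul_left_cancel' hd |>.eq_of_lt_of_lt i.2 j.2))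
  refine ⟨fun i ↦ hw.shift _, fun i j hij ↦ ⟨fun t _ ↦ hne hij t, ?_⟩⟩
  rintro t - ⟨h, h', hmove⟩
  simp only [add_right_comm t 1] at h h' hmove
  exact hmove (hc.edge_mod_succ hw.2.2 (hmod i j t) h h')

end Launch

section Detour

variable {V W : Type*} {G : SimpleGraph V} {H : SimpleGraph W} {v : ℕ → V} {w : ℕ → W} {m n d : ℕ}

/-- The walk `v` up to time `m`, then `w` for `n` time steps, then back to the starting point of
`v`, which is reached at time `m + n + 2`. -/
def detour (v : ℕ → V) (m : ℕ) (w : ℕ → W) (n : ℕ) (t : ℕ) : V ⊕ W :=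
  if t ≤ m then .inl (v t) else if t ≤ m + 1 + n then .inr (w (t - (m + 1))) else .inl (v 0)

theorem detour_of_le {t : ℕ} (ht : t ≤ m) : detour v m w n t = .inl (v t) := if_pos ht

theorem detour_add {t : ℕ} (ht : t ≤ n) : detour v m w n (m + 1 + t) = .inr (w t) := by
  simp [detour, show ¬m + 1 + t ≤ m by omega, ht]

theorem detour_last : detour v m w n (m + n + 2) = .inl (v 0) := by
  rw [detour, if_neg (by omega), if_neg (by omega)]

theorem detour_step_cases {t : ℕ} (ht : t < m + n + 2) :
    (t < m ∧ detour v m w n t = .inl (v t) ∧ detour v m w n (t + 1) = .inl (v (t + 1))) ∨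
    (t = m ∧ detour v m w n t = .inl (v m) ∧ detour v m w n (t + 1) = .inr (w 0)) ∨
    (∃ s < n, t = m + 1 + s ∧ detour v m w n t = .inr (w s) ∧
      detour v m w n (t + 1) = .inr (w (s + 1))) ∨
    (t = m + 1 + n ∧ detour v m w n t = .inr (w n) ∧ detour v m w n (t + 1) = .inl (v 0)) := by
  rcases (show t < m ∨ t = m ∨ (∃ s < n, t = m + 1 + s) ∨ t = m + 1 + n by
    by_cases h : m < t ∧ t < m + 1 + n
    · exact .inr (.inr (.inl ⟨t - (m + 1), by omega, by omega⟩))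
    · omega) with h | rfl | ⟨s, hs, rfl⟩ | rfl
  · exact .inl ⟨h, detour_of_le h.le, detour_of_le h⟩
  · exact .inr (.inl ⟨rfl, detour_of_le le_rfl, detour_add n.zero_le⟩)
  · exact .inr (.inr (.inl ⟨s, hs, rfl, detour_add hs.le, detour_add hs⟩))
  · refine .inr (.inr (.inr ⟨rfl, detour_add le_rfl, ?_⟩))
    rw [← detour_last (w := w)]
    congr 1
    omega

theorem agencyTour_detour (hv : AgencyTour G m v) (hw : AgencyTour H n w) :
    AgencyTour ((G ⊕g H) ⊔ edge (.inl (v 0)) (.inr (w 0))) (m + n + 2) (detour v m w n) := by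
  obtain ⟨hv_step, hv_visit, hv_closed⟩ := hv
  obtain ⟨hw_step, hw_visit, hw_closed⟩ := hw
  refine ⟨fun t ht ↦ ?_, ?_, (detour_of_le m.zero_le).trans detour_last.symm⟩
  · rcases detour_step_cases (v := v) (w := w) ht with
      ⟨h, e, e'⟩ | ⟨-, e, e'⟩ | ⟨s, h, -, e, e'⟩ | ⟨-, e, e'⟩ <;> rw [e, e']
    · simpa [edge_adj] using hv_step t h
    · simp [edge_adj, ← hv_closed]
    · simpa [edge_adj] using hw_step s h
    · simp [edge_adj, ← hw_closed]
  · rintro (x | y)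
    · obtain ⟨t, ht, rfl⟩ := hv_visit x
      exact ⟨t, by omega, detour_of_le ht⟩
    · obtain ⟨t, ht, rfl⟩ := hw_visit y
      exact ⟨m + 1 + t, by omega, detour_add ht⟩

theorem detour_cases {t : ℕ} (ht : t ≤ m + n + 2) :
    (t ≤ m ∧ detour v m w n t = .inl (v t)) ∨
    (∃ s ≤ n, t = m + 1 + s ∧ detour v m w n t = .inr (w s)) ∨
    (t = m + n + 2 ∧ detour v m w n t = .inl (v 0)) := by
  by_cases ht' : t < m + n + 2
  · rcases detour_step_cases (v := v) (w := w) ht' with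
      ⟨h, e, -⟩ | ⟨rfl, e, -⟩ | ⟨s, h, rfl, e, -⟩ | ⟨rfl, e, -⟩
    · exact .inl ⟨h.le, e⟩
    · exact .inl ⟨le_rfl, e⟩
    · exact .inr (.inl ⟨s, h.le, rfl, e⟩)
    · exact .inr (.inl ⟨n, le_rfl, rfl, e⟩)
  · obtain rfl : t = m + n + 2 := by omega
    exact .inr (.inr ⟨rfl, detour_last⟩)

theorem crashFreeMod_detour (hv : CrashFreeMod d m v) (hw : CrashFreeMod d n w) (hd : ¬ d ∣ n + 1)
    (hback : ∀ t ≤ m, v t = v 0 → ¬ t ≡ m + n + 2 [MOD d]) :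
    CrashFreeMod d (m + n + 2) (detour v m w n) where
  node s hs t ht hst h := by
    rcases detour_cases (v := v) (w := w) hs with ⟨hs', e⟩ | ⟨s, hs', rfl, e⟩ | ⟨rfl, e⟩ <;>
    rcases detour_cases (v := v) (w := w) ht with ⟨ht', e'⟩ | ⟨t, ht', rfl, e'⟩ | ⟨rfl, e'⟩ <;>
    simp only [e, e', Sum.inl.injEq, Sum.inr.injEq, reduceCtorEq] at h
    · exact hv.node s hs' t ht' hst h
    · exact absurd hst (hback s hs' h)
    · rw [hw.node s hs' t ht' (hst.add_left_cancel' _) h]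
    · exact absurd hst.symm (hback t ht' h.symm)
    · rfl
  edge s hs t ht hst h h' := by
    have hturn : ¬ m ≡ m + 1 + n [MOD d] := by
      rwa [Nat.modEq_iff_dvd' (by omega), show m + 1 + n - m = n + 1 by omega]
    rcases detour_step_cases (v := v) (w := w) hs with
      ⟨hs', e, f⟩ | ⟨rfl, e, f⟩ | ⟨s, hs', rfl, e, f⟩ | ⟨rfl, e, f⟩ <;>
    rcases detour_step_cases (v := v) (w := w) ht with
      ⟨ht', e', f'⟩ | ⟨rfl, e', f'⟩ | ⟨t, ht', rfl, e', f'⟩ | ⟨rfl, e', f'⟩ <;>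
    simp only [e, e', f, f', Sum.inl.injEq, Sum.inr.injEq, reduceCtorEq] at h h' ⊢
    · exact hv.edge s hs' t ht' hst h h'
    · exact absurd hst hturn
    · exact hw.edge s hs' t ht' (hst.add_left_cancel' _) h h'
    · exact absurd hst.symm hturn

end Detour
/-- Some tree on `n` vertices has a tour with time horizon `ℓ` that is crash-free modulo `d` and
is at its starting vertex only at times whose residues modulo `d` lie in `P`. The vertex type is
existentially quantified, so that trees can be grafted without relabelling vertices. -/
def HasTreeTour (d n ℓ : ℕ) (P : Finset ℕ) : Prop :=
  ∃ (V : Type) (_ : Fintype V) (G : SimpleGraph V) (w : ℕ → V), Fintype.card V = n ∧ G.IsTree ∧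
    AgencyTour G ℓ w ∧ CrashFreeMod d ℓ w ∧ ∀ t ≤ ℓ, w t = w 0 → t % d ∈ P

section Grafting

variable {d k n n' ℓ ℓ' : ℕ} {P Q : Finset ℕ}

theorem hasTreeTour_of_lt (hℓ : ℓ < d) : HasTreeTour d 1 ℓ (Finset.range (ℓ + 1)) := by
  refine ⟨Unit, inferInstance, ⊥, fun _ ↦ (), rfl, .of_subsingleton,
    ⟨fun _ _ ↦ .inl rfl, fun _ ↦ ⟨0, ℓ.zero_le, rfl⟩, rfl⟩,
    ⟨fun s hs t ht hst _ ↦ hst.eq_of_lt_of_lt (hs.trans_lt hℓ) (ht.trans_lt hℓ),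
      fun _ _ _ _ _ _ _ ↦ rfl⟩, fun t ht _ ↦ ?_⟩
  exact Finset.mem_range.2 (Nat.lt_succ_of_le ((t.mod_le d).trans ht))

theorem HasTreeTour.graft (h : HasTreeTour d n ℓ P) (h' : HasTreeTour d n' ℓ' Q)
    (hd : ¬ d ∣ ℓ' + 1) {c : ℕ} (hc : (ℓ + ℓ' + 2) % d = c) (hP : c ∉ P) :
    HasTreeTour d (n + n') (ℓ + ℓ' + 2) (insert c P) := by
  subst hc
  obtain ⟨V, _, G, v, rfl, hG, hv, hvc, hvP⟩ := h
  obtain ⟨W, _, H, w, rfl, hH, hw, hwc, -⟩ := h'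
  refine ⟨V ⊕ W, inferInstance, _, detour v ℓ w ℓ', Fintype.card_sum,
    isTree_sum_sup_edge hG hH (v 0) (w 0), agencyTour_detour hv hw,
    crashFreeMod_detour hvc hwc hd fun t ht h0 hmod ↦ hP (hmod ▸ hvP t ht h0), fun t ht h0 ↦ ?_⟩
  rw [detour_of_le ℓ.zero_le] at h0
  rcases detour_cases (v := v) (w := w) ht with ⟨ht', e⟩ | ⟨s, -, -, e⟩ | ⟨rfl, -⟩
  · exact Finset.mem_insert_of_mem (hvP t ht' (Sum.inl_injective (e.symm.trans h0)))
  · simp [e] at h0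
  · exact Finset.mem_insert_self _ _

theorem HasTreeTour.exists_feasibleAgency (h : HasTreeTour d n ℓ P) (hℓ : ℓ + 1 = d * k) :
    ∃ G : SimpleGraph (Fin n), G.IsTree ∧
      ∃ a : Fin k → ℕ → Fin n, FeasibleAgency G k (ℓ + 1) a := by
  obtain ⟨V, _, G, w, hn, hG, hw, hc, -⟩ := h
  let e := G.overFinIso hn
  exact ⟨G.overFin hn, e.isTree_iff.1 hG, _,
    feasibleAgency_of_crashFreeMod (hw.map_iso e) (hc.comp e.injective) hℓ⟩

theorem hasTreeTour_cherry : HasTreeTour 4 3 5 {1, 3, 0} := by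
  have hleaf : HasTreeTour 4 1 0 {0} := hasTreeTour_of_lt four_pos
  -- Without parking at the first leaf the second return would be at time `4`, congruent to `0`.
  have hparked : HasTreeTour 4 1 1 (Finset.range 2) := hasTreeTour_of_lt (by decide)
  have hleg : HasTreeTour 4 2 3 {3, 0} := hleaf.graft hparked (by decide) rfl (by decide)
  exact hleg.graft hleaf (by decide) rfl (by decide)

theorem exists_hasTreeTour_spine (r : ℕ) : ∃ P, HasTreeTour 4 (7 * r + 3) (16 * r + 5) P := by
  induction r with
  | zero => exact ⟨_, hasTreeTour_cherry⟩
  | succ r ih =>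
    obtain ⟨P, hspine⟩ := ih
    have hhub : HasTreeTour 4 1 0 {0} := hasTreeTour_of_lt four_pos
    have hfirst : HasTreeTour 4 4 7 {3, 0} :=
      hhub.graft hasTreeTour_cherry (by decide) rfl (by decide)
    have hmiddle : HasTreeTour 4 (7 * r + 7) (16 * r + 14) {2, 3, 0} := by
      convert hfirst.graft hspine (by omega) (c := 2) (by omega) (by decide) using 1 <;> ring
    refine ⟨{1, 2, 3, 0}, ?_⟩
    convert hmiddle.graft hasTreeTour_cherry (by decide) (c := 1) (by omega) (by decide)
      using 1 <;> ring

end Grafting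

/-- for every positive integer `r` there is a tree on `7r + 6`
vertices admitting a feasible agency with time horizon `T = 16r + 12` and
`k = 4r + 3` agents (so `T/k = 4`). -/
theorem stmt5 (r : ℕ) (hr : 0 < r) :
    ∃ G : SimpleGraph (Fin (7 * r + 6)), G.IsTree ∧
      ∃ a : Fin (4 * r + 3) → ℕ → Fin (7 * r + 6),
        FeasibleAgency G (4 * r + 3) (16 * r + 12) a := by
  have hleaf : HasTreeTour 4 1 0 {0} := hasTreeTour_of_lt four_pos
  have hstalk : HasTreeTour 4 2 2 {2, 0} := hleaf.graft hleaf (by decide) rfl (by decide)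
  obtain ⟨P, hspine⟩ := exists_hasTreeTour_spine r
  have hbody : HasTreeTour 4 (7 * r + 5) (16 * r + 9) {1, 2, 0} := by
    convert hstalk.graft hspine (by omega) (c := 1) (by omega) (by decide) using 1 <;> ring
  have htree : HasTreeTour 4 (7 * r + 6) (16 * r + 11) {3, 1, 2, 0} :=
    hbody.graft hleaf (by decide) (by omega) (by decide)
  exact htree.exists_feasibleAgency (by ring)
end

section
/- If G is a 3-regular 3-edge-connected finite simple graph on n vertices, then G admits a feasible agency with time horizon T = 2n and k = n/2 agents (so T/k = 4 and the strength is α = max(n/k, T/n) = 2). -/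
open SimpleGraph

/-!
All agents follow one closed walk with parking of length `2n`, with delays that are multiples of
four. Two of them can meet only if the walk visits a vertex twice, or crosses an edge in both
directions, at times that agree modulo four, so the walk is built to avoid this.

A cubic bridgeless graph has a perfect matching meeting every triangle: contract the isolated
triangles and apply Tutte's theorem. The complementary 2-factor, oriented as a permutation `σ`, then
has all cycles of length at least four. Exchanging the successors of the two ends of suitable
matching edges splices the cycles of `σ` into a single cyclic permutation `τ`; let `S` be the set of
ends of the edges used. The walk runs through `τ`. It spends two units of time at each `v ∈ S`, one
at `v` and one at its mate, and between one and four units parked at each other vertex.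

If the times spent off `S` add up to a multiple of four on each cycle of `σ`, the times at which the
walk reaches the vertices, read modulo four, can be shifted on whole pieces of the splicing so that
mates in `S` are two units apart, and then no two visits of a vertex conflict. A cycle of `σ` with
`s` vertices off `S` can be given any multiple of four between `s` and `4s` as its total time. The
spliced edges form a tree on the cycles of `σ`, all of which have length at least four, and this
leaves enough room to make the total length of the walk exactly `2n`.
-/

section Weights

open Finset

variable {ι κ : Type*}

theorem exists_between_sum_eq (s : Finset ι) {l u : ι → ℕ} (hlu : ∀ i ∈ s, l i ≤ u i) {N : ℕ}
    (hl : ∑ i ∈ s, l i ≤ N) (hu : N ≤ ∑ i ∈ s, u i) :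
    ∃ w : ι → ℕ, (∀ i ∈ s, l i ≤ w i ∧ w i ≤ u i) ∧ ∑ i ∈ s, w i = N := by
  classical
  induction N, hl using Nat.le_induction with
  | base => exact ⟨l, fun i hi => ⟨le_rfl, hlu i hi⟩, rfl⟩
  | succ N _ ih =>
    obtain ⟨w, hw, hsum⟩ := ih (by lia)
    obtain ⟨i, hi, hlt⟩ := exists_lt_of_sum_lt (hsum.trans_lt (Nat.lt_of_succ_le hu))
    refine ⟨Function.update w i (w i + 1), fun j hj => ?_, ?_⟩
    · have := hw j hj
      rcases eq_or_ne j i with rfl | hne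
      · rw [Function.update_self]; lia
      · rwa [Function.update_of_ne hne]
    · rw [sum_update_of_mem hi, ← hsum, ← add_sum_erase s w hi, sdiff_singleton_eq_erase]
      ring

theorem exists_weights_dvd_sum_fiber [Fintype κ] [DecidableEq κ] {s : Finset ι} (f : ι → κ)
    {p N : ℕ} (hp : 0 < p) (hl : ∑ q, #{i ∈ s | f i = q} ⌈/⌉ p ≤ N) (hu : N ≤ #s) :
    ∃ w : ι → ℕ, (∀ i ∈ s, 0 < w i ∧ w i ≤ p) ∧ (∀ q, p ∣ ∑ i ∈ s with f i = q, w i) ∧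
      ∑ i ∈ s, w i = p * N := by
  have hceil (q : κ) : #{i ∈ s | f i = q} ⌈/⌉ p ≤ #{i ∈ s | f i = q} := by
    rw [ceilDiv_le_iff_le_mul hp]
    exact Nat.le_mul_of_pos_left _ hp
  rw [card_eq_sum_card_fiberwise (f := f) (t := univ) fun _ _ => mem_univ _] at hu
  obtain ⟨c, hc, hcN⟩ := exists_between_sum_eq univ (fun q _ => hceil q) hl hu
  have hfiber (q : κ) : ∃ w : ι → ℕ, (∀ i ∈ {i ∈ s | f i = q}, 0 < w i ∧ w i ≤ p) ∧
      ∑ i ∈ s with f i = q, w i = p * c q := by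
    refine exists_between_sum_eq (l := fun _ => 1) (u := fun _ => p) _ (fun _ _ => hp) ?_ ?_
    · rw [sum_const, smul_eq_mul, mul_one, ← ceilDiv_le_iff_le_mul hp]
      exact (hc q (mem_univ q)).1
    · rw [sum_const, smul_eq_mul, mul_comm]
      exact Nat.mul_le_mul_right p (hc q (mem_univ q)).2
  choose w hw hsum using hfiber
  have hsum' (q : κ) : ∑ i ∈ s with f i = q, w (f i) i = p * c q := by
    rw [← hsum q]
    exact sum_congr rfl fun i hi => by rw [(mem_filter.1 hi).2]
  refine ⟨fun i => w (f i) i, fun i hi => hw _ i (mem_filter.2 ⟨hi, rfl⟩),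
    fun q => ⟨c q, hsum' q⟩, ?_⟩
  rw [← sum_fiberwise s f, ← hcN, mul_sum]
  exact sum_congr rfl fun q _ => hsum' q

theorem two_mul_sum_ceilDiv_card_fiber_le [Fintype ι] [DecidableEq ι] [Fintype κ] [DecidableEq κ]
    (f : ι → κ) (s : Finset ι) (hf : ∀ q, 4 ≤ #{i | f i = q}) (hs : #s + 2 ≤ 2 * Fintype.card κ)
    (hmeet : Fintype.card κ = 1 ∨ ∀ q, ∃ i ∈ s, f i = q) :
    2 * ∑ q, #{i ∈ sᶜ | f i = q} ⌈/⌉ 4 ≤ #sᶜ := by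
  have hsplit (q : κ) : #{i | f i = q} = #{i ∈ sᶜ | f i = q} + #{i ∈ s | f i = q} := by
    rw [← card_union_of_disjoint (disjoint_filter_filter disjoint_compl_left), ← filter_union,
      union_comm, union_compl]
  have hceil (a : ℕ) : a ⌈/⌉ 4 = (a + 3) / 4 := rfl
  have hsc := card_eq_sum_card_fiberwise (s := sᶜ) (f := f) (t := univ) fun _ _ => mem_univ _
  have hcs := card_eq_sum_card_fiberwise (s := s) (f := f) (t := univ) fun _ _ => mem_univ _
  rcases hmeet with hκ | hmeet
  · obtain ⟨q, hq⟩ := Fintype.card_eq_one_iff.1 hκ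
    have : (univ : Finset κ) = {q} := eq_singleton_iff_unique_mem.2 ⟨mem_univ q, fun x _ => hq x⟩
    rw [this, sum_singleton] at hsc hcs ⊢
    have := hsplit q
    have := hf q
    grind
  · have hle : ∑ q, (2 * (#{i ∈ sᶜ | f i = q} ⌈/⌉ 4) + 2) ≤
        ∑ q, (#{i ∈ sᶜ | f i = q} + #{i ∈ s | f i = q}) := by
      refine sum_le_sum fun q _ => ?_
      obtain ⟨i, hi, hiq⟩ := hmeet q
      have : 0 < #{i ∈ s | f i = q} := card_pos.2 ⟨i, mem_filter.2 ⟨hi, hiq⟩⟩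
      have := hsplit q
      have := hf q
      rw [hceil]
      lia
    rw [sum_add_distrib, sum_add_distrib, ← hsc, ← hcs, ← mul_sum, sum_const, card_univ,
      smul_eq_mul] at hle
    lia

end Weights

section Cuts

open Finset

variable {V : Type*}

theorem even_card_of_involutive {s : Finset V} {m : V → V} (hm : m.Involutive)
    (hne : ∀ v ∈ s, m v ≠ v) (hs : ∀ v ∈ s, m v ∈ s) : Even #s := by
  have : ∑ _v ∈ s, (1 : ZMod 2) = 0 :=
    sum_involution (fun v _ => m v) (fun _ _ => by decide) (fun v hv _ => hne v hv)
      (fun v hv => hs v hv) (fun v _ => hm v)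
  rwa [sum_const, nsmul_one, ZMod.natCast_eq_zero_iff_even] at this

variable (G : SimpleGraph V) [DecidableRel G.Adj]

theorem even_card_interedges_self (s : Finset V) : Even #(G.interedges s s) :=
  even_card_of_involutive Prod.swap_swap
    (fun _ he heq => (G.mem_interedges_iff.1 he).2.2.ne (congrArg Prod.snd heq))
    fun _ => (swap_mem_interedges_iff G).2

variable {G} in
theorem card_interedges_self_of_isClique {s : Finset V} (hs : G.IsClique s) :
    #(G.interedges s s) = #s * #s - #s := by
  classical
  rw [← offDiag_card]
  refine congrArg card (Finset.ext fun e => ?_)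
  rw [mem_interedges_iff, mem_offDiag]
  exact ⟨fun ⟨ha, hb, hab⟩ => ⟨ha, hb, hab.ne⟩, fun ⟨ha, hb, hab⟩ => ⟨ha, hb, hs ha hb hab⟩⟩

variable [Fintype V]

theorem card_interedges_univ (s : Finset V) : #(G.interedges s univ) = ∑ v ∈ s, G.degree v := by
  simp_rw [interedges_def, card_filter, sum_product, ← card_neighborFinset_eq_degree,
    neighborFinset_eq_filter, card_filter]

variable [DecidableEq V]

theorem card_interedges_self_add_compl (s : Finset V) :
    #(G.interedges s s) + #(G.interedges s sᶜ) = ∑ v ∈ s, G.degree v := by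
  rw [← card_interedges_univ,
    ← card_union_of_disjoint (G.interedges_disjoint_right s disjoint_compl_right)]
  simp_rw [interedges_def, ← filter_union, ← product_union, union_compl]

variable {G}

theorem odd_card_interedges_compl (hdeg : ∀ v, Odd (G.degree v)) {s : Finset V} (hs : Odd #s) :
    Odd #(G.interedges s sᶜ) := by
  have hsum : Odd (∑ v ∈ s, G.degree v) := by
    rwa [odd_sum_iff_odd_card_odd, filter_true_of_mem fun v _ => hdeg v]
  rw [← card_interedges_self_add_compl] at hsum
  exact (Nat.odd_add'.1 hsum).2 (even_card_interedges_self G s)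

theorem card_interedges_compl_ne_one (hG : G.IsEdgeConnected 2) (s : Finset V) :
    #(G.interedges s sᶜ) ≠ 1 := by
  intro h
  obtain ⟨⟨a, b⟩, hab⟩ := card_eq_one.1 h
  have hmem : (a, b) ∈ G.interedges s sᶜ := hab ▸ mem_singleton_self _
  obtain ⟨ha, hb, -⟩ := G.mk_mem_interedges_iff.1 hmem
  obtain ⟨p⟩ := hG a b (s := {s(a, b)}) (by simp)
  obtain ⟨d, -, hd₁, hd₂⟩ := p.exists_boundary_dart (s : Set V) ha (by simpa using hb)
  obtain ⟨hGd, hd⟩ := (deleteEdges_adj ..).1 d.adj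
  have hdab : (d.fst, d.snd) ∈ G.interedges s sᶜ :=
    G.mk_mem_interedges_iff.2 ⟨hd₁, by simpa using hd₂, hGd⟩
  rw [hab, mem_singleton] at hdab
  exact hd (congrArg Sym2.mk.uncurry hdab)

theorem three_le_card_interedges_compl (hdeg : ∀ v, Odd (G.degree v)) (hG : G.IsEdgeConnected 2)
    {s : Finset V} (hs : Odd #s) : 3 ≤ #(G.interedges s sᶜ) := by
  have := odd_card_interedges_compl hdeg hs
  have := card_interedges_compl_ne_one hG s
  grind

theorem card_interedges_compl_le_three (hreg : G.IsRegularOfDegree 3) {s : Finset V}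
    (hs : G.IsClique s) (hodd : Odd #s) : #(G.interedges s sᶜ) ≤ 3 := by
  have hsum := card_interedges_self_add_compl G s
  rw [card_interedges_self_of_isClique hs, sum_const_nat fun v _ => hreg v] at hsum
  obtain ⟨k, hk⟩ := hodd
  have hsq : #s ≤ #s * #s := Nat.le_mul_self _
  zify [hsq] at hsum
  rcases Nat.lt_or_ge k 2 with hlt | hge
  · interval_cases k <;> simp only [hk] at hsum <;> lia
  · nlinarith

end Cuts

section ContractedMatching

open Finset

variable {V : Type*} {G : SimpleGraph V}

theorem mem_of_adj_image_supp_deleteVerts {U : Set V}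
    {c : ((⊤ : G.Subgraph).deleteVerts U).coe.ConnectedComponent} {a b : V} (hadj : G.Adj a b)
    (ha : a ∈ Subtype.val '' c.supp) (hb : b ∉ Subtype.val '' c.supp) : b ∈ U := by
  by_contra hbU
  obtain ⟨⟨a, haU⟩, hac, rfl⟩ := ha
  have hadj' : ((⊤ : G.Subgraph).deleteVerts U).coe.Adj ⟨a, haU⟩ ⟨b, by simpa using hbU⟩ := by
    simpa [hbU] using ⟨haU.2, hadj⟩
  exact hb ⟨_, c.mem_supp_of_adj_mem_supp hac hadj', rfl⟩

theorem card_le_card_of_interedges_compl {ι κ : Type*} [Fintype V] [DecidableEq V]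
    [DecidableRel G.Adj] {k : ℕ} (hk : 0 < k) {O : Finset ι} {U : Finset κ} {S : ι → Finset V}
    {F : κ → Finset V} (hS : (O : Set ι).PairwiseDisjoint S)
    (hlow : ∀ c ∈ O, k ≤ #(G.interedges (S c) (S c)ᶜ))
    (hup : ∀ q ∈ U, #(G.interedges (F q) (F q)ᶜ) ≤ k)
    (hadj : ∀ c ∈ O, ∀ a ∈ S c, ∀ b ∉ S c, G.Adj a b → ∃ q ∈ U, b ∈ F q ∧ a ∉ F q) :
    #O ≤ #U := by
  classical
  have hdisj : (O : Set ι).PairwiseDisjoint fun c => G.interedges (S c) (S c)ᶜ :=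
    fun c hc d hd hne => disjoint_left.2 fun e hec hed =>
      disjoint_left.1 (hS hc hd hne) (G.mem_interedges_iff.1 hec).1 (G.mem_interedges_iff.1 hed).1
  have hswap : Set.MapsTo Prod.swap (O.biUnion fun c => G.interedges (S c) (S c)ᶜ : Set (V × V))
      (U.biUnion fun q => G.interedges (F q) (F q)ᶜ) := by
    rintro ⟨a, b⟩ he
    obtain ⟨c, hc, he⟩ := mem_biUnion.1 he
    obtain ⟨ha, hb, hab⟩ := G.mk_mem_interedges_iff.1 he
    obtain ⟨q, hq, hbq, haq⟩ := hadj c hc a ha b (mem_compl.1 hb) hab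
    exact mem_biUnion.2 ⟨q, hq, G.mk_mem_interedges_iff.2 ⟨hbq, mem_compl.2 haq, hab.symm⟩⟩
  refine Nat.le_of_mul_le_mul_right ?_ hk
  calc #O * k ≤ ∑ c ∈ O, #(G.interedges (S c) (S c)ᶜ) := card_nsmul_le_sum _ _ _ hlow
    _ = #(O.biUnion fun c => G.interedges (S c) (S c)ᶜ) := (card_biUnion hdisj).symm
    _ ≤ #(U.biUnion fun q => G.interedges (F q) (F q)ᶜ) :=
      card_le_card_of_injOn _ hswap Prod.swap_injective.injOn
    _ ≤ #U * k := card_biUnion_le_card_mul _ _ _ hup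

variable {Q : Type*} {f : V → Q} [Fintype V]

theorem odd_card_filter_mem_iff [DecidableEq Q] (hf : ∀ q, Odd #{v | f v = q}) (T : Finset Q) :
    Odd #{v | f v ∈ T} ↔ Odd #T := by
  have hfiber : ∀ q ∈ T, #{v ∈ ({v | f v ∈ T} : Finset V) | f v = q} = #{v | f v = q} :=
    fun q hq => congrArg card (by grind)
  rw [card_eq_sum_card_fiberwise (s := {v | f v ∈ T}) (f := f) (t := T)
    fun v hv => (mem_filter.1 hv).2, odd_sum_iff_odd_card_odd,
    filter_true_of_mem fun q hq => (hfiber q hq).symm ▸ hf q]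

theorem exists_isPerfectMatching_map [DecidableEq V] [DecidableRel G.Adj]
    [Finite Q] [DecidableEq Q] (hdeg : ∀ v, Odd (G.degree v)) (hG : G.IsEdgeConnected 2)
    (hf : ∀ q, Odd #{v | f v = q})
    (hout : ∀ q, #(G.interedges {v | f v = q} ({v | f v = q} : Finset V)ᶜ) ≤ 3) :
    ∃ M : (G.map f).Subgraph, M.IsPerfectMatching := by
  classical
  have := Fintype.ofFinite Q
  rw [tutte]
  intro U hU
  let H := ((⊤ : (G.map f).Subgraph).deleteVerts U).coe
  let T (c : H.ConnectedComponent) : Finset Q := (Subtype.val '' c.supp).toFinset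
  have hT (c : H.ConnectedComponent) : #(T c) = c.supp.ncard := by
    rw [← Set.ncard_eq_toFinset_card', Set.ncard_image_of_injective _ Subtype.val_injective]
  have hdisj : Pairwise (Function.onFun Disjoint T) := fun c d hne => by
    rw [Function.onFun, Set.disjoint_toFinset, Set.disjoint_image_iff Subtype.val_injective]
    exact H.pairwise_disjoint_supp_connectedComponent hne
  refine hU.not_ge ?_
  rw [Set.ncard_eq_toFinset_card', Set.ncard_eq_toFinset_card']
  refine card_le_card_of_interedges_compl (G := G) zero_lt_three
    (S := fun c => {v | f v ∈ T c}) (F := fun q => {v | f v = q}) ?_ ?_ (fun q _ => hout q) ?_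
  · exact fun c _ d _ hne => disjoint_left.2 fun v hc hd => disjoint_left.1 (hdisj hne)
      (mem_filter.1 hc).2 (mem_filter.1 hd).2
  · intro c hc
    refine three_le_card_interedges_compl hdeg hG ((odd_card_filter_mem_iff hf _).2 ?_)
    rw [hT]
    exact (Set.mem_toFinset (s := H.oddComponents)).1 hc
  · intro c _ a ha b hb hab
    have ha' : f a ∈ Subtype.val '' c.supp := by simpa [T] using ha
    have hb' : f b ∉ Subtype.val '' c.supp := by simpa [T] using hb
    have hne : f a ≠ f b := fun h => hb' (h ▸ ha')
    refine ⟨f b, Set.mem_toFinset.2 ?_, by simp, by simpa using hne⟩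
    exact mem_of_adj_image_supp_deleteVerts (map_adj_apply' hab hne) ha' hb'

end ContractedMatching

section LiftedMatching

open Finset

variable {V Q : Type*} {G : SimpleGraph V} {f : V → Q}

theorem exists_section_adj_of_isPerfectMatching_map {M : (G.map f).Subgraph}
    (hM : M.IsPerfectMatching) :
    ∃ t : Q → V, (∀ q, f (t q) = q) ∧ ∀ p q, M.Adj p q → G.Adj (t p) (t q) := by
  classical
  choose m hm using fun q => (Subgraph.isPerfectMatching_iff.1 hM q).exists
  have hmate {p q : Q} (hpq : M.Adj p q) : m p = q := hM.1.eq_of_adj_left (hm p) hpq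
  have hedge (e : M.edgeSet) : ∃ t : Q → V, ∀ p q, s(p, q) = e → f (t p) = p ∧
      G.Adj (t p) (t q) := by
    obtain ⟨⟨p, q⟩, hpq⟩ := e
    obtain ⟨hne, a, b, hab, rfl, rfl⟩ := M.adj_sub hpq
    refine ⟨Function.update (fun _ => b) (f a) a, fun p q he => ?_⟩
    rcases Sym2.eq_iff.1 he with ⟨rfl, rfl⟩ | ⟨rfl, rfl⟩
    · simp [Function.update_of_ne hne.symm, hab]
    · simp [Function.update_of_ne hne.symm, hab.symm]
  choose t ht using hedge
  let e (q : Q) : M.edgeSet := ⟨s(q, m q), hm q⟩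
  refine ⟨fun q => t (e q) q, fun q => (ht (e q) q (m q) rfl).1, fun p q hpq => ?_⟩
  obtain rfl := hmate hpq
  have hedges : e (m p) = e p := Subtype.ext <|
    show s(m p, m (m p)) = s(p, m p) by rw [hmate hpq.symm, Sym2.eq_swap]
  simp only [hedges]
  exact (ht (e p) p (m p) rfl).2

theorem exists_isMatching_verts_eq_range {M : (G.map f).Subgraph} (hM : M.IsPerfectMatching)
    {t : Q → V} (ht : t.Injective) (hadj : ∀ p q, M.Adj p q → G.Adj (t p) (t q)) :
    ∃ N : G.Subgraph, N.verts = Set.range t ∧ N.IsMatching := by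
  let N : G.Subgraph :=
    { verts := Set.range t
      Adj := Relation.Map M.Adj t t
      adj_sub := by rintro _ _ ⟨p, q, hpq, rfl, rfl⟩; exact hadj p q hpq
      edge_vert := by rintro _ _ ⟨p, -, -, rfl, -⟩; exact ⟨p, rfl⟩
      symm := ⟨by rintro _ _ ⟨p, q, hpq, rfl, rfl⟩; exact ⟨q, p, hpq.symm, rfl, rfl⟩⟩ }
  refine ⟨N, rfl, ?_⟩
  rintro _ ⟨p, rfl⟩
  obtain ⟨q, hpq, huniq⟩ := Subgraph.isPerfectMatching_iff.1 hM p
  refine ⟨t q, ⟨p, q, hpq, rfl, rfl⟩, ?_⟩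
  rintro _ ⟨p', q', hpq', hp, rfl⟩
  rw [huniq q' (ht hp ▸ hpq')]

variable [Fintype V] [DecidableEq Q]

theorem exists_isMatching_fiber_sdiff_singleton (hclique : ∀ q, G.IsClique {v | f v = q})
    (hodd : ∀ q, Odd #{v | f v = q}) {t : Q → V} (ht : ∀ q, f (t q) = q) (q : Q) :
    ∃ N : G.Subgraph, N.verts = {v | f v = q} \ {t q} ∧ N.IsMatching := by
  refine (((hclique q).subset Set.sdiff_subset).even_iff_exists_isMatching (Set.toFinite _)).1 ?_
  have hmem : t q ∈ {v | f v = q} := ht q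
  rw [Set.ncard_sdiff_singleton_of_mem hmem, Set.ncard_eq_toFinset_card', Set.toFinset_ofPred]
  exact (hodd q).tsub_odd odd_one

theorem exists_isPerfectMatching_of_map (hclique : ∀ q, G.IsClique {v | f v = q})
    (hodd : ∀ q, Odd #{v | f v = q}) {M : (G.map f).Subgraph} (hM : M.IsPerfectMatching) :
    ∃ N : G.Subgraph, N.IsPerfectMatching ∧
      ∀ v w, v ≠ w → f v = f w → ∃ a b, f a = f v ∧ f b = f v ∧ N.Adj a b := by
  obtain ⟨t, ht, hadj⟩ := exists_section_adj_of_isPerfectMatching_map hM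
  obtain ⟨N, hNv, hN⟩ := exists_isMatching_verts_eq_range hM
    (Function.LeftInverse.injective ht) hadj
  choose K hKv hK using exists_isMatching_fiber_sdiff_singleton hclique hodd ht
  have hKmem {q : Q} {v : V} : v ∈ (K q).verts ↔ f v = q ∧ v ≠ t q := by simp [hKv]
  have hKsup : (⨆ q, K q).IsMatching := Subgraph.IsMatching.iSup hK fun p q hpq => by
    simp only [(hK _).support_eq_verts]
    exact Set.disjoint_left.2 fun v hp hq => hpq ((hKmem.1 hp).1.symm.trans (hKmem.1 hq).1)
  refine ⟨N ⊔ ⨆ q, K q, ⟨hN.sup hKsup ?_, fun v => ?_⟩, fun v w hne hvw => ?_⟩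
  · rw [hN.support_eq_verts, hKsup.support_eq_verts, hNv, Subgraph.verts_iSup, Set.disjoint_iff]
    rintro _ ⟨⟨p, rfl⟩, hp⟩
    obtain ⟨q, hq⟩ := Set.mem_iUnion.1 hp
    exact (hKmem.1 hq).2 (by rw [← (hKmem.1 hq).1, ht])
  · rw [Subgraph.verts_sup, Subgraph.verts_iSup, hNv]
    by_cases hv : v = t (f v)
    · exact Or.inl ⟨f v, hv.symm⟩
    · exact Or.inr (Set.mem_iUnion.2 ⟨f v, hKmem.2 ⟨rfl, hv⟩⟩)
  · obtain ⟨a, ha⟩ : ∃ a, a ∈ (K (f v)).verts := by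
      by_cases hv : v = t (f v)
      · exact ⟨w, hKmem.2 ⟨hvw.symm, hv ▸ hne.symm⟩⟩
      · exact ⟨v, hKmem.2 ⟨rfl, hv⟩⟩
    obtain ⟨b, hab, -⟩ := hK _ ha
    exact ⟨a, b, (hKmem.1 ha).1, (hKmem.1 hab.snd_mem).1,
      Subgraph.sup_adj.2 (Or.inr (Subgraph.iSup_adj.2 ⟨_, hab⟩))⟩

end LiftedMatching

section Triangles

open Finset

variable {V : Type*} {G : SimpleGraph V}

/-- A triangle of `G` that shares no vertex with another triangle of `G`. -/
def IsIsolatedTriangle (G : SimpleGraph V) (T : Finset V) : Prop :=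
  G.IsNClique 3 T ∧ ∀ ⦃T' v⦄, G.IsNClique 3 T' → v ∈ T → v ∈ T' → T' = T

/-- The partition of the vertices into the isolated triangles of `G` and singletons. -/
def isolatedTriangleSetoid (G : SimpleGraph V) : Setoid V where
  r v w := v = w ∨ ∃ T, IsIsolatedTriangle G T ∧ v ∈ T ∧ w ∈ T
  iseqv :=
    { refl _ := Or.inl rfl
      symm := by
        rintro v w (rfl | ⟨T, hT, hv, hw⟩)
        · exact Or.inl rfl
        · exact Or.inr ⟨T, hT, hw, hv⟩
      trans := by
        rintro u v w (rfl | ⟨T, hT, hu, hv⟩) (rfl | ⟨T', hT', hv', hw⟩)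
        · exact Or.inl rfl
        · exact Or.inr ⟨T', hT', hv', hw⟩
        · exact Or.inr ⟨T, hT, hu, hv⟩
        · exact Or.inr ⟨T, hT, hu, hT.2 hT'.1 hv hv' ▸ hw⟩ }

theorem exists_isClique_odd_isolatedTriangleSetoid (q : Quotient (isolatedTriangleSetoid G)) :
    ∃ s : Finset V, G.IsClique s ∧ Odd #s ∧ ∀ v, ⟦v⟧ = q ↔ v ∈ s := by
  obtain ⟨v, rfl⟩ := q.exists_rep
  by_cases hv : ∃ T, IsIsolatedTriangle G T ∧ v ∈ T
  · obtain ⟨T, hT, hv⟩ := hv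
    refine ⟨T, hT.1.isClique, by rw [hT.1.card_eq]; decide, fun w => Quotient.eq.trans ⟨?_, ?_⟩⟩
    · rintro (rfl | ⟨T', hT', hw, hv'⟩)
      exacts [hv, hT.2 hT'.1 hv hv' ▸ hw]
    · exact fun hw => Or.inr ⟨T, hT, hw, hv⟩
  · refine ⟨{v}, by simp, by simp, fun w => Quotient.eq.trans ⟨?_, ?_⟩⟩
    · rintro (rfl | ⟨T, hT, -, hv'⟩)
      exacts [mem_singleton_self w, absurd ⟨T, hT, hv'⟩ hv]
    · exact fun hw => Or.inl (mem_singleton.1 hw)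

variable [Fintype V] [DecidableRel G.Adj]

theorem union_eq_insert_neighborFinset [DecidableEq V] (hreg : G.IsRegularOfDegree 3)
    {T T' : Finset V} (hT : G.IsNClique 3 T) (hT' : G.IsNClique 3 T') (hne : T ≠ T') {v : V}
    (hv : v ∈ T) (hv' : v ∈ T') : T ∪ T' = insert v (G.neighborFinset v) := by
  have hsub {T : Finset V} (hT : G.IsNClique 3 T) (hv : v ∈ T) :
      T ⊆ insert v (G.neighborFinset v) := fun w hw => by
    rcases eq_or_ne w v with rfl | hwv
    · exact mem_insert_self _ _
    · exact mem_insert_of_mem ((G.mem_neighborFinset _ _).2 (hT.isClique hv hw hwv.symm))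
  refine eq_of_subset_of_card_le (union_subset (hsub hT hv) (hsub hT' hv')) ?_
  rw [card_insert_of_notMem (by simp), card_neighborFinset_eq_degree, hreg v]
  by_contra! hlt
  have hcard : #(T ∪ T') ≤ 3 := Nat.le_of_lt_succ hlt
  exact hne <| (eq_of_subset_of_card_le subset_union_left (hT.card_eq ▸ hcard)).trans
    (eq_of_subset_of_card_le subset_union_right (hT'.card_eq ▸ hcard)).symm

theorem exists_adj_of_not_isIsolatedTriangle (hreg : G.IsRegularOfDegree 3) {T : Finset V}
    (hT : G.IsNClique 3 T) (hiso : ¬IsIsolatedTriangle G T) {M : G.Subgraph}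
    (hM : M.IsPerfectMatching) : ∃ v ∈ T, ∃ w ∈ T, M.Adj v w := by
  classical
  obtain ⟨T', v, hT', hv, hv', hne⟩ :
      ∃ T' v, G.IsNClique 3 T' ∧ v ∈ T ∧ v ∈ T' ∧ T ≠ T' := by
    simpa [IsIsolatedTriangle, hT, eq_comm] using hiso
  have hcard : #(T ∪ T') = 4 := by
    rw [union_eq_insert_neighborFinset hreg hT hT' hne hv hv', card_insert_of_notMem (by simp),
      card_neighborFinset_eq_degree, hreg v]
  have hinter : 1 < #(T ∩ T') := by
    have := card_union_add_card_inter T T'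
    rw [hT.card_eq, hT'.card_eq] at this
    lia
  obtain ⟨a, ha, b, hb, hab⟩ := one_lt_card.1 hinter
  obtain ⟨c, hc⟩ : ∃ c, T' \ T = {c} := by
    rw [← card_eq_one, ← union_sdiff_left, card_sdiff_of_subset subset_union_left, hcard,
      hT.card_eq]
  by_contra! hno
  have hmate {x : V} (hx : x ∈ T ∩ T') : M.Adj x c := by
    obtain ⟨hxT, hxT'⟩ := mem_inter.1 hx
    obtain ⟨y, hxy⟩ := (Subgraph.isPerfectMatching_iff.1 hM x).exists
    have hy : y ∈ T ∪ T' := by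
      rw [union_eq_insert_neighborFinset hreg hT hT' hne hxT hxT']
      exact mem_insert_of_mem ((G.mem_neighborFinset _ _).2 hxy.adj_sub)
    have hyc : y ∈ T' \ T := by grind
    rw [hc, mem_singleton] at hyc
    exact hyc ▸ hxy
  exact hab (hM.1.eq_of_adj_right (hmate ha) (hmate hb))

theorem exists_isPerfectMatching_of_isClique_fiber {Q : Type*} [Finite Q] [DecidableEq Q]
    {f : V → Q} (hreg : G.IsRegularOfDegree 3) (hG : G.IsEdgeConnected 2)
    (hclique : ∀ q, G.IsClique {v | f v = q}) (hodd : ∀ q, Odd #{v | f v = q}) :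
    ∃ M : G.Subgraph, M.IsPerfectMatching ∧
      ∀ v w, v ≠ w → f v = f w → ∃ a b, f a = f v ∧ f b = f v ∧ M.Adj a b := by
  classical
  have hdeg (v : V) : Odd (G.degree v) := by rw [hreg v]; decide
  obtain ⟨M, hM⟩ := exists_isPerfectMatching_map hdeg hG hodd fun q =>
    card_interedges_compl_le_three hreg (by simpa using hclique q) (hodd q)
  exact exists_isPerfectMatching_of_map hclique hodd hM

theorem exists_isPerfectMatching_meets_triangles (hreg : G.IsRegularOfDegree 3)
    (hG : G.IsEdgeConnected 2) :
    ∃ M : G.Subgraph, M.IsPerfectMatching ∧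
      ∀ T, G.IsNClique 3 T → ∃ v ∈ T, ∃ w ∈ T, M.Adj v w := by
  classical
  choose s hs hodd hmem using exists_isClique_odd_isolatedTriangleSetoid (G := G)
  obtain ⟨M, hM, hclass⟩ := exists_isPerfectMatching_of_isClique_fiber
    (f := Quotient.mk (isolatedTriangleSetoid G)) hreg hG (by simpa [hmem] using hs)
    (by simpa [hmem] using hodd)
  refine ⟨M, hM, fun T hT => ?_⟩
  by_cases hiso : IsIsolatedTriangle G T
  · obtain ⟨v, hv, w, hw, hvw⟩ := one_lt_card.1 (by rw [hT.card_eq]; decide : 1 < #T)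
    obtain ⟨a, b, ha, hb, hab⟩ := hclass v w hvw (Quotient.sound (Or.inr ⟨T, hiso, hv, hw⟩))
    have hT_of_eq {x : V} (hx : (⟦x⟧ : Quotient (isolatedTriangleSetoid G)) = ⟦v⟧) : x ∈ T := by
      rcases Quotient.exact hx with rfl | ⟨T', hT', hx, hv'⟩
      exacts [hv, hiso.2 hT'.1 hv hv' ▸ hx]
    exact ⟨a, hT_of_eq ha, b, hT_of_eq hb, hab⟩
  · exact exists_adj_of_not_isIsolatedTriangle hreg hT hiso hM

end Triangles

section Orientation

open Equiv.Perm

variable {V : Type*} {F : SimpleGraph V}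

theorem adj_formPerm_tail_support [DecidableEq V] {v : V} {p : F.Walk v v} (hp : p.IsCycle) {u : V}
    (hu : u ∈ p.support.tail) : F.Adj u (p.support.tail.formPerm u) := by
  have hlen : p.support.tail.length = p.length := by simp
  obtain ⟨i, hi, rfl⟩ := List.getElem_of_mem hu
  rw [List.formPerm_apply_getElem _ hp.support_nodup]
  simp only [List.getElem_tail, Walk.support_getElem_eq_getVert, hlen]
  rcases (show i + 1 ≤ p.length by lia).lt_or_eq with hlt | heq
  · rw [Nat.mod_eq_of_lt hlt]
    exact p.adj_getVert_succ hlt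
  · rw [heq, Nat.mod_self, p.getVert_length]
    simpa using p.adj_getVert_succ (i := 0) (by lia)

variable [Finite V]

theorem exists_perm_forall_mem_supp_adj (hF : ∀ v, (F.neighborSet v).ncard = 2)
    (c : F.ConnectedComponent) :
    ∃ g : Equiv.Perm V, ∀ v ∈ c.supp, F.Adj v (g v) ∧ g (g v) ≠ v := by
  classical
  obtain ⟨u, hu⟩ := c.nonempty_supp
  have hne (v : V) : (F.neighborSet v).Nonempty :=
    Set.nonempty_of_ncard_ne_zero (by rw [hF v]; decide)
  have hcycles : F.IsCycles := fun v _ => hF v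
  obtain ⟨p, hp, hsupp⟩ :=
    hcycles.exists_cycle_toSubgraph_verts_eq_connectedComponentSupp hu (hne u)
  refine ⟨p.support.tail.formPerm, fun v hv => ?_⟩
  have hvp : v ∈ p.support.tail := by
    rw [← hsupp, Walk.mem_verts_toSubgraph, Walk.mem_support_iff] at hv
    rcases hv with rfl | hv
    exacts [Walk.end_mem_tail_support hp.not_nil, hv]
  refine ⟨adj_formPerm_tail_support hp hvp, fun hfix => ?_⟩
  have hcyc : p.support.tail.formPerm.IsCycleOn (p.support.tail.toFinset : Set V) := by
    rw [List.coe_toFinset]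
    exact hp.support_nodup.isCycleOn_formPerm
  have hdvd : p.support.tail.toFinset.card ∣ 2 :=
    (hcyc.pow_apply_eq (List.mem_toFinset.2 hvp)).1 hfix
  rw [List.toFinset_card_of_nodup hp.support_nodup, List.length_tail, Walk.length_support] at hdvd
  exact absurd (Nat.le_of_dvd two_pos hdvd) (by have := hp.three_le_length; lia)

theorem exists_perm_forall_adj (hF : ∀ v, (F.neighborSet v).ncard = 2) :
    ∃ σ : Equiv.Perm V, ∀ v, F.Adj v (σ v) ∧ σ (σ v) ≠ v := by
  choose g hg using exists_perm_forall_mem_supp_adj hF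
  have hadj (v : V) : F.Adj v (g (F.connectedComponentMk v) v) := (hg _ v rfl).1
  have hcomp (v : V) : F.connectedComponentMk (g (F.connectedComponentMk v) v) =
      F.connectedComponentMk v :=
    (ConnectedComponent.connectedComponentMk_eq_of_adj (hadj v)).symm
  have hinj : Function.Injective fun v => g (F.connectedComponentMk v) v := fun v w hvw => by
    have hvw' : F.connectedComponentMk v = F.connectedComponentMk w := by
      rw [← hcomp v, ← hcomp w]
      exact congrArg _ hvw
    refine (g (F.connectedComponentMk v)).injective ?_
    simpa only [hvw'] using hvw
  refine ⟨Equiv.ofBijective _ (Finite.injective_iff_bijective.1 hinj), fun v => ⟨hadj v, ?_⟩⟩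
  simp only [Equiv.ofBijective_apply, hcomp]
  exact (hg _ v rfl).2

end Orientation

section CubicDecomposition

variable {V : Type*}

/-- A decomposition of the edges of a cubic graph `G` into the oriented cycles of a permutation
`σ`, each of length at least three, and a perfect matching, given as the involution `m` sending
each vertex to its mate. -/
structure IsCubicDecomposition (G : SimpleGraph V) (σ : Equiv.Perm V) (m : V → V) : Prop where
  adj_next (v : V) : G.Adj v (σ v)
  next_next_ne (v : V) : σ (σ v) ≠ v
  adj_mate (v : V) : G.Adj v (m v)
  mate_involutive : m.Involutive
  mate_ne_next (v : V) : m v ≠ σ v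
  eq_of_adj {v w : V} : G.Adj v w → w = σ v ∨ v = σ w ∨ w = m v

variable [Fintype V] {G : SimpleGraph V} [DecidableRel G.Adj]

theorem ncard_neighborSet_sdiff_spanningCoe (hreg : G.IsRegularOfDegree 3) {M : G.Subgraph}
    (hM : M.IsPerfectMatching) (v : V) : ((G \ M.spanningCoe).neighborSet v).ncard = 2 := by
  obtain ⟨w, hw, huniq⟩ := Subgraph.isPerfectMatching_iff.1 hM v
  have hset : (G \ M.spanningCoe).neighborSet v = G.neighborSet v \ {w} := by
    ext x
    simp only [mem_neighborSet, sdiff_adj, Subgraph.spanningCoe_adj, Set.mem_sdiff,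
      Set.mem_singleton_iff]
    exact and_congr_right fun _ => not_congr ⟨huniq x, fun hx => hx ▸ hw⟩
  rw [hset, Set.ncard_sdiff_singleton_of_mem ((G.mem_neighborSet v w).2 hw.adj_sub),
    Set.ncard_eq_toFinset_card', ← neighborFinset_def, card_neighborFinset_eq_degree, hreg v]

theorem eq_or_eq_or_eq_of_adj (hreg : G.IsRegularOfDegree 3) {a b c v w : V} (ha : G.Adj v a)
    (hb : G.Adj v b) (hc : G.Adj v c) (hab : a ≠ b) (hac : a ≠ c) (hbc : b ≠ c)
    (hw : G.Adj v w) : w = a ∨ w = b ∨ w = c := by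
  classical
  have hN : {a, b, c} = G.neighborFinset v := by
    refine Finset.eq_of_subset_of_card_le ?_ ?_
    · simp [Finset.insert_subset_iff, ha, hb, hc]
    · rw [card_neighborFinset_eq_degree, hreg v,
        Finset.card_eq_three.2 ⟨a, b, c, hab, hac, hbc, rfl⟩]
  simpa [← hN] using (G.mem_neighborFinset v w).2 hw

theorem exists_isCubicDecomposition (hreg : G.IsRegularOfDegree 3) {M : G.Subgraph}
    (hM : M.IsPerfectMatching) :
    ∃ (σ : Equiv.Perm V) (m : V → V), IsCubicDecomposition G σ m ∧ ∀ v w, M.Adj v w ↔ w = m v := by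
  obtain ⟨σ, hσ⟩ := exists_perm_forall_adj (ncard_neighborSet_sdiff_spanningCoe hreg hM)
  choose m hm huniq using Subgraph.isPerfectMatching_iff.1 hM
  have hnext (v : V) : G.Adj v (σ v) ∧ ¬M.Adj v (σ v) := (hσ v).1
  have hmate (v : V) : m v ≠ σ v := fun h => (hnext v).2 (h ▸ hm v)
  refine ⟨σ, m, ⟨fun v => (hnext v).1, fun v => (hσ v).2, fun v => (hm v).adj_sub,
    fun v => (huniq _ _ (hm v).symm).symm, hmate, fun {v w} hvw => ?_⟩,
    fun v w => ⟨huniq v w, fun h => h ▸ hm v⟩⟩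
  obtain ⟨u, rfl⟩ := σ.surjective v
  have hu : G.Adj (σ u) u := (hnext u).1.symm
  have hum : u ≠ m (σ u) := fun h => by
    have hadj : M.Adj (σ u) (m (σ u)) := hm (σ u)
    rw [← h] at hadj
    exact (hnext u).2 hadj.symm
  rcases eq_or_eq_or_eq_of_adj hreg (hnext (σ u)).1 hu (hm (σ u)).adj_sub (hσ u).2
    (hmate (σ u)).symm hum hvw with h | h | h
  exacts [Or.inl h, Or.inr (Or.inl (congrArg σ h.symm)), Or.inr (Or.inr h)]

theorem exists_isCubicDecomposition_apply_apply_apply_ne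
    (hreg : G.IsRegularOfDegree 3) (hG : G.IsEdgeConnected 2) :
    ∃ (σ : Equiv.Perm V) (m : V → V), IsCubicDecomposition G σ m ∧ ∀ v, σ (σ (σ v)) ≠ v := by
  classical
  obtain ⟨M, hM, htri⟩ := exists_isPerfectMatching_meets_triangles hreg hG
  obtain ⟨σ, m, h, hmate⟩ := exists_isCubicDecomposition hreg hM
  refine ⟨σ, m, h, fun v hv => ?_⟩
  have hT : G.IsNClique 3 {v, σ v, σ (σ v)} := is3Clique_triple_iff.2
    ⟨h.adj_next v, by simpa only [hv] using (h.adj_next (σ (σ v))).symm, h.adj_next (σ v)⟩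
  obtain ⟨a, ha, b, hb, hab⟩ := htri _ hT
  rw [hmate] at hab
  have hσa : m a ≠ σ a := h.mate_ne_next a
  have hσb : m b ≠ σ b := h.mate_ne_next b
  have hba : m b = a := by rw [hab, h.mate_involutive]
  have hne : a ≠ b := hab ▸ (h.adj_mate a).ne
  simp only [Finset.mem_insert, Finset.mem_singleton] at ha hb
  grind

end CubicDecomposition

section CycleCount

open Equiv Perm

variable {α : Type*}

theorem rel_of_sameCycle {r : α → α → Prop} (hr : Equivalence r) {f : Perm α}
    (hf : ∀ x, r x (f x)) {x y : α} (hxy : f.SameCycle x y) : r x y := by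
  obtain ⟨n, rfl⟩ := hxy
  induction n using Int.induction_on with
  | zero => exact hr.refl x
  | succ n ih =>
    rw [add_comm, zpow_one_add, mul_apply]
    exact hr.trans ih (hf _)
  | pred n ih =>
    refine hr.trans ih (hr.symm ?_)
    have := hf ((f ^ (-(n : ℤ) - 1)) x)
    rwa [← mul_apply, ← zpow_one_add, add_sub_cancel] at this

theorem card_quotient_lt [Finite α] {s t : Setoid α} (hst : s ≤ t) {a b : α} (hs : ¬s a b)
    (ht : t a b) : Nat.card (Quotient t) < Nat.card (Quotient s) := by
  have hsurj : Function.Surjective (Quotient.map id hst : Quotient s → Quotient t) :=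
    Quotient.ind fun x => ⟨⟦x⟧, rfl⟩
  refine (Nat.card_le_card_of_surjective _ hsurj).lt_of_ne fun hcard => hs ?_
  have hbij := (Nat.bijective_iff_surjective_and_card _).2 ⟨hsurj, hcard.symm⟩
  exact Quotient.exact (hbij.1 (Quotient.sound ht : (⟦a⟧ : Quotient t) = ⟦b⟧))

/-- The number of cycles of the permutation `τ`, counting fixed points. -/
noncomputable def cycleCount (τ : Perm α) : ℕ :=
  Nat.card (Quotient (SameCycle.setoid τ))

variable [Finite α] [DecidableEq α] {τ : Perm α} {a b : α}

theorem sameCycle_mul_swap (hab : ¬τ.SameCycle a b) : (τ * swap a b).SameCycle a b := by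
  by_contra hcon
  have hpow (k : ℕ) : (τ * swap a b).SameCycle a ((τ ^ k) (τ b)) := by
    induction k with
    | zero => simpa using SameCycle.refl (τ * swap a b) a |>.apply_right
    | succ k ih =>
      have ha : (τ ^ k) (τ b) ≠ a := fun h => hab <| by
        rw [← h, sameCycle_pow_left, sameCycle_apply_left]
      have hb : (τ ^ k) (τ b) ≠ b := fun h => hcon (by rwa [h] at ih)
      simpa [pow_succ', swap_apply_of_ne_of_ne ha hb] using ih.apply_right
  obtain ⟨k, hk⟩ := (sameCycle_apply_left.2 (SameCycle.refl τ b)).exists_nat_pow_eq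
  have hreach := hpow k
  rw [hk] at hreach
  exact hcon hreach

theorem sameCycle_mul_swap_of_sameCycle (hab : ¬τ.SameCycle a b) {x y : α}
    (hxy : τ.SameCycle x y) : (τ * swap a b).SameCycle x y := by
  refine rel_of_sameCycle (SameCycle.setoid (τ * swap a b)).iseqv (fun z => ?_) hxy
  have hswap : (τ * swap a b).SameCycle (swap a b z) (τ z) := by
    have := (SameCycle.refl (τ * swap a b) (swap a b z)).apply_right
    simpa using this
  refine SameCycle.trans ?_ hswap
  rw [swap_apply_def]
  split_ifs with hza hzb
  · rw [hza]
    exact sameCycle_mul_swap hab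
  · rw [hzb]
    exact (sameCycle_mul_swap hab).symm
  · exact SameCycle.refl _ z

theorem cycleCount_mul_swap_lt (hab : ¬τ.SameCycle a b) :
    cycleCount (τ * swap a b) < cycleCount τ :=
  card_quotient_lt (fun _ _ => sameCycle_mul_swap_of_sameCycle hab) hab (sameCycle_mul_swap hab)

end CycleCount

section Splicing

open Equiv Perm

variable {V : Type*} [DecidableEq V]

/-- `IsSplicing σ m S τ` says that `τ` arises from `σ` by exchanging the successors of `a` and
`m a`, for finitely many pairs `{a, m a}` that lie in different cycles when their turn comes;
`S` is the set of all `a` and `m a` used. -/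
inductive IsSplicing (σ : Perm V) (m : V → V) : Finset V → Perm V → Prop
  | refl : IsSplicing σ m ∅ σ
  | splice {S : Finset V} {τ : Perm V} {a : V} (h : IsSplicing σ m S τ)
      (ha : ¬τ.SameCycle a (m a)) : IsSplicing σ m (insert a (insert (m a) S)) (τ * swap a (m a))

namespace IsSplicing

variable {σ τ : Perm V} {m : V → V} {S : Finset V}

theorem mate_mem (h : IsSplicing σ m S τ) (hm : m.Involutive) {v : V} (hv : v ∈ S) :
    m v ∈ S := by
  induction h with
  | refl => simp at hv
  | splice _ ha ih =>
    simp only [Finset.mem_insert] at hv ⊢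
    rcases hv with rfl | rfl | hv
    · exact Or.inr (Or.inl rfl)
    · exact Or.inl (hm _)
    · exact Or.inr (Or.inr (ih hv))

variable [Finite V]

theorem sameCycle (h : IsSplicing σ m S τ) {x y : V} (hxy : σ.SameCycle x y) :
    τ.SameCycle x y := by
  induction h with
  | refl => exact hxy
  | splice _ ha ih => exact sameCycle_mul_swap_of_sameCycle ha ih

theorem sameCycle_mate (h : IsSplicing σ m S τ) (hm : m.Involutive) {v : V} (hv : v ∈ S) :
    τ.SameCycle v (m v) := by
  induction h with
  | refl => simp at hv
  | splice _ ha ih =>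
    simp only [Finset.mem_insert] at hv
    rcases hv with rfl | rfl | hv
    · exact sameCycle_mul_swap ha
    · rw [hm]
      exact (sameCycle_mul_swap ha).symm
    · exact sameCycle_mul_swap_of_sameCycle ha (ih hv)

theorem apply_eq (h : IsSplicing σ m S τ) (hm : m.Involutive) (v : V) :
    τ v = σ (S.piecewise m id v) := by
  induction h generalizing v with
  | refl => simp
  | @splice S τ a h ha ih =>
    have haS : a ∉ S := fun haS => ha (h.sameCycle_mate hm haS)
    have hmaS : m a ∉ S := fun hmaS => haS (hm a ▸ h.mate_mem hm hmaS)
    rw [mul_apply, ih]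
    congr 1
    rcases eq_or_ne v a with rfl | hva
    · simp [hmaS]
    rcases eq_or_ne v (m a) with rfl | hvma
    · simp [haS, hm a]
    · simp [swap_apply_of_ne_of_ne hva hvma, Finset.piecewise, hva, hvma]

theorem card_add_le (h : IsSplicing σ m S τ) :
    S.card + 2 * cycleCount τ ≤ 2 * cycleCount σ := by
  induction h with
  | refl => simp
  | @splice S τ a _ ha ih =>
    have hlt := cycleCount_mul_swap_lt ha
    have hinsert := Finset.card_insert_le a (insert (m a) S)
    have hinsert' := Finset.card_insert_le (m a) S
    lia

theorem exists_potential {A : Type*} [AddCommGroup A] (h : IsSplicing σ m S τ)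
    (hm : m.Involutive) {c : A} (hc : c + c = 0) (r₀ : V → A) :
    ∃ r : V → A, (∀ v, r (σ v) - r v = r₀ (σ v) - r₀ v) ∧ ∀ v ∈ S, r (m v) = r v + c := by
  classical
  induction h with
  | refl => exact ⟨r₀, fun _ => rfl, by simp⟩
  | @splice S τ a h ha ih =>
    obtain ⟨r, hr, hrS⟩ := ih
    -- Shifting `r` along the `τ`-cycle of `a` keeps both relations, and fixes the one at `a`.
    let δ := r (m a) - r a - c
    let r' v := if τ.SameCycle a v then r v + δ else r v
    have hra : r' (m a) = r' a + c := by
      simp only [r', ha, SameCycle.refl, if_true, if_false, δ]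
      abel
    have hshift {x y : V} (hxy : τ.SameCycle x y) : r' y - r' x = r y - r x := by
      have hiff : τ.SameCycle a y ↔ τ.SameCycle a x :=
        ⟨fun hay => hay.trans hxy.symm, fun hax => hax.trans hxy⟩
      simp only [r', hiff]
      split_ifs <;> abel
    refine ⟨r', fun v => ?_, fun v hv => ?_⟩
    · rw [hshift (h.sameCycle (SameCycle.refl σ v).apply_right), hr]
    · simp only [Finset.mem_insert] at hv
      rcases hv with rfl | rfl | hv
      · exact hra
      · rw [hm, hra, add_assoc, hc, add_zero]
      · rw [← sub_eq_iff_eq_add', hshift (h.sameCycle_mate hm hv), hrS v hv, add_sub_cancel_left]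

end IsSplicing

theorem exists_isSplicing_forall_sameCycle [Finite V] {G : SimpleGraph V} (hG : G.Preconnected)
    {σ : Perm V} {m : V → V} (h : IsCubicDecomposition G σ m) :
    ∃ S τ, IsSplicing σ m S τ ∧ ∀ x y, τ.SameCycle x y := by
  obtain ⟨τ, ⟨S, hS⟩, hmin⟩ := Set.exists_min_image {τ | ∃ S, IsSplicing σ m S τ} cycleCount
    (Set.toFinite _) ⟨σ, ∅, .refl⟩
  refine ⟨S, τ, hS, fun x y => ?_⟩
  have hadj {v w : V} (hvw : G.Adj v w) : τ.SameCycle v w := by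
    rcases h.eq_of_adj hvw with rfl | rfl | rfl
    · exact hS.sameCycle (SameCycle.refl σ v).apply_right
    · exact hS.sameCycle (SameCycle.refl σ w).apply_left
    · by_contra hne
      exact (hmin _ ⟨_, hS.splice hne⟩).not_gt (cycleCount_mul_swap_lt hne)
  obtain ⟨p⟩ := hG x y
  induction p with
  | nil => exact SameCycle.refl τ _
  | cons hvw _ ih => exact (hadj hvw).trans ih

end Splicing

section Potential

open Equiv Perm

variable {α A : Type*} [AddCommGroup A] {σ : Perm α}

theorem isCycleOn_sameCycle_fiber (q : Quotient (SameCycle.setoid σ)) :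
    σ.IsCycleOn {v | (⟦v⟧ : Quotient (SameCycle.setoid σ)) = q} := by
  refine ⟨σ.bijOn fun v => ?_, fun v hv w hw => Quotient.exact (hv.trans hw.symm)⟩
  have hv : (⟦σ v⟧ : Quotient (SameCycle.setoid σ)) = ⟦v⟧ :=
    Quotient.sound (SameCycle.refl σ v).apply_left
  simp only [Set.mem_ofPred_eq, hv]

theorem sum_range_card_pow_apply {s : Finset α} (hσ : σ.IsCycleOn s) {a : α} (ha : a ∈ s)
    (f : α → A) : ∑ i ∈ Finset.range s.card, f ((σ ^ i) a) = ∑ x ∈ s, f x := by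
  refine Finset.sum_nbij (fun i => (σ ^ i) a) (fun i _ => ?_) (fun i hi j hj hij => ?_)
    (fun x hx => ?_) fun _ _ => rfl
  · exact hσ.1.mapsTo.perm_pow i ha
  · exact ((hσ.pow_apply_eq_pow_apply ha).1 hij).eq_of_lt_of_lt (Finset.mem_range.1 hi)
      (Finset.mem_range.1 hj)
  · obtain ⟨i, hi, rfl⟩ := hσ.exists_pow_eq ha hx
    exact ⟨i, Finset.coe_range s.card ▸ hi, rfl⟩

theorem lt_card_sameCycle_fiber [Fintype α] [DecidableEq (Quotient (SameCycle.setoid σ))] {n : ℕ}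
    (hσ : ∀ v, ∀ i ∈ Finset.Icc 1 n, (σ ^ i) v ≠ v) (q : Quotient (SameCycle.setoid σ)) :
    n < ({v | ⟦v⟧ = q} : Finset α).card := by
  let s : Finset α := {v | ⟦v⟧ = q}
  have hs : σ.IsCycleOn s := by simpa [s] using isCycleOn_sameCycle_fiber q
  have hq : q.out ∈ s := by simp [s]
  by_contra! hle
  exact hσ q.out s.card (Finset.mem_Icc.2 ⟨Finset.card_pos.2 ⟨_, hq⟩, hle⟩) (hs.pow_card_apply hq)

theorem exists_potential_of_sum_fiber_eq_zero [Fintype α]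
    [DecidableEq (Quotient (SameCycle.setoid σ))] {o : α → A}
    (ho : ∀ q : Quotient (SameCycle.setoid σ), ∑ v with ⟦v⟧ = q, o v = 0) :
    ∃ r : α → A, ∀ v, r (σ v) = r v + o v := by
  let c (v : α) : Quotient (SameCycle.setoid σ) := ⟦v⟧
  let s (q : Quotient (SameCycle.setoid σ)) : Finset α := {v | c v = q}
  have hs (q) : σ.IsCycleOn (s q) := by simpa [s] using isCycleOn_sameCycle_fiber q
  have hbase (q) : q.out ∈ s q := by simp [s, c]
  have hmem (v) : v ∈ s (c v) := by simp [s]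
  have hc (v) : c (σ v) = c v := Quotient.sound (SameCycle.refl σ v).apply_left
  choose k hk hkv using fun v => (hs (c v)).exists_pow_eq (hbase (c v)) (hmem v)
  refine ⟨fun v => ∑ i ∈ Finset.range (k v), o ((σ ^ i) (c v).out), fun v => ?_⟩
  have hmod : k (σ v) ≡ k v + 1 [MOD (s (c v)).card] := by
    rw [← (hs (c v)).pow_apply_eq_pow_apply (hbase (c v)), pow_succ', mul_apply, hkv v, ← hc,
      hkv (σ v)]
  have hlt : k (σ v) < (s (c v)).card := hc v ▸ hk (σ v)
  have hsucc : ∑ i ∈ Finset.range (k v + 1), o ((σ ^ i) (c v).out) =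
      ∑ i ∈ Finset.range (k v), o ((σ ^ i) (c v).out) + o v := by
    rw [Finset.sum_range_succ, hkv]
  rw [← hsucc]
  simp only [hc]
  rcases (Nat.add_one_le_of_lt (hk v)).lt_or_eq with hkv' | hkv'
  · rw [hmod.eq_of_lt_of_lt hlt hkv']
  · have hzero : k (σ v) = 0 := by
      rw [hkv'] at hmod
      exact Nat.eq_zero_of_dvd_of_lt ((hmod.dvd_iff dvd_rfl).2 dvd_rfl) hlt
    rw [hzero, Finset.sum_range_zero, hkv',
      sum_range_card_pow_apply (hs (c v)) (hbase (c v)), ho]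

end Potential

section Schedule

open Equiv Perm

variable {V α : Type*} {G : SimpleGraph V} {p : ℕ} {π : Perm α} {pos : α → V}
  {clock : α → ZMod p}

/-- A single closed walk with parking, run through by the cyclic permutation `π` of its instants,
with `pos x` the position at the instant `x`. It is so arranged that agents following it
at instants of equal `clock`, i.e. with delays divisible by `p`, never crash. -/
structure IsSchedule (G : SimpleGraph V) (p : ℕ) (π : Perm α) (pos : α → V)
    (clock : α → ZMod p) : Prop where
  sameCycle (x y : α) : π.SameCycle x y
  clock_next (x : α) : clock (π x) = clock x + 1
  surjective_pos : pos.Surjective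
  eq_or_adj (x : α) : pos x = pos (π x) ∨ G.Adj (pos x) (pos (π x))
  eq_of_pos_eq {x y : α} : clock x = clock y → pos x = pos y → x = y
  eq_next_of_cross {x y : α} :
    clock x = clock y → pos x = pos (π y) → pos (π x) = pos y → pos x = pos (π x)

theorem IsSchedule.clock_pow_apply (h : IsSchedule G p π pos clock) (t : ℕ) (x : α) :
    clock ((π ^ t) x) = clock x + t := by
  induction t with
  | zero => simp
  | succ t ih => rw [pow_succ', mul_apply, h.clock_next, ih, Nat.cast_succ, add_assoc]

theorem IsSchedule.exists_feasibleAgency [Fintype α] [Nonempty α]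
    (h : IsSchedule G p π pos clock) (hp : 0 < p) {k : ℕ} (hk : p * k ≤ Fintype.card α) :
    ∃ a : Fin k → ℕ → V, FeasibleAgency G k (Fintype.card α) a := by
  obtain ⟨x₀⟩ := ‹Nonempty α›
  have hπ : π.IsCycleOn (Finset.univ : Finset α) :=
    ⟨by simp [π.bijective.bijOn_univ], fun x _ y _ => h.sameCycle x y⟩
  let x (i : Fin k) (t : ℕ) : α := (π ^ (t + p * i)) x₀
  have hnext (i t) : x i (t + 1) = π (x i t) := by
    simp only [x, add_right_comm t 1, pow_succ', mul_apply]
  have hclock (i j t) : clock (x i t) = clock (x j t) := by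
    simp [x, h.clock_pow_apply]
  have hinj {i j t} (hij : x i t = x j t) : i = j := by
    have hmod := Nat.ModEq.add_left_cancel'
      t ((hπ.pow_apply_eq_pow_apply (Finset.mem_univ x₀)).1 hij)
    have hlt (i : Fin k) : p * i < Fintype.card α :=
      ((Nat.mul_lt_mul_left hp).2 i.2).trans_le hk
    exact Fin.ext (Nat.eq_of_mul_eq_mul_left hp (hmod.eq_of_lt_of_lt (hlt i) (hlt j)))
  refine ⟨fun i t => pos (x i t), fun i => ⟨fun t _ => ?_, fun v => ?_, ?_⟩,
    fun i j hij => ⟨fun t _ hpos => ?_, fun t _ ⟨hij', hji, hne⟩ => ?_⟩⟩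
  · simpa only [hnext] using h.eq_or_adj (x i t)
  · obtain ⟨y, rfl⟩ := h.surjective_pos v
    obtain ⟨t, ht, hy⟩ := hπ.exists_pow_eq (Finset.mem_univ (x i 0)) (Finset.mem_univ y)
    refine ⟨t, ht.le, congrArg pos ?_⟩
    simpa [x, pow_add] using hy
  · refine congrArg pos ((hπ.pow_apply_eq_pow_apply (Finset.mem_univ x₀)).2 ?_)
    simp [Nat.ModEq]
  · exact hij (hinj (h.eq_of_pos_eq (hclock i j t) hpos))
  · simp only [hnext] at hij' hji hne
    exact hne (h.eq_next_of_cross (hclock i j t) hij' hji)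

end Schedule

section Tower

open Equiv Perm

variable {V : Type*} {d : V → ℕ}

theorem sigma_fin_eq_iff {x y : Σ v, Fin (d v)} :
    x = y ↔ x.1 = y.1 ∧ (x.2 : ℕ) = y.2 := by
  refine ⟨fun h => h ▸ ⟨rfl, rfl⟩, fun ⟨hfst, hsnd⟩ => ?_⟩
  obtain ⟨v, i⟩ := x
  obtain ⟨w, j⟩ := y
  obtain rfl : v = w := hfst
  exact congrArg (Sigma.mk v) (Fin.ext hsnd)

/-- The successor map of the tower over `τ` with heights `d`: it climbs from slot to slot over
each point, and passes from the top over `v` to the bottom over `τ v`. -/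
def towerNext (τ : Perm V) (hd : ∀ v, 0 < d v) (x : Σ v, Fin (d v)) : Σ v, Fin (d v) :=
  if h : x.2 + 1 < d x.1 then ⟨x.1, x.2 + 1, h⟩ else ⟨τ x.1, 0, hd _⟩

theorem towerNext_injective (τ : Perm V) (hd : ∀ v, 0 < d v) :
    (towerNext τ hd).Injective := by
  rintro ⟨v, i⟩ ⟨w, j⟩ hxy
  simp only [towerNext] at hxy
  split_ifs at hxy with hi hj hj <;> obtain ⟨hfst, hsnd⟩ := sigma_fin_eq_iff.1 hxy
  · exact sigma_fin_eq_iff.2 ⟨hfst, Nat.succ_injective hsnd⟩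
  · exact absurd hsnd (Nat.succ_ne_zero i)
  · exact absurd hsnd.symm (Nat.succ_ne_zero j)
  · obtain rfl : v = w := τ.injective hfst
    exact sigma_fin_eq_iff.2 ⟨rfl, by dsimp only; lia⟩

variable [Finite V]

/-- The permutation of the slots of the tower over `τ` with heights `d`. -/
noncomputable def towerPerm (τ : Perm V) (hd : ∀ v, 0 < d v) : Perm (Σ v, Fin (d v)) :=
  .ofBijective _ (Finite.injective_iff_bijective.1 (towerNext_injective τ hd))

theorem towerPerm_of_lt (τ : Perm V) (hd : ∀ v, 0 < d v) {v : V} {i : ℕ} (hi : i + 1 < d v) :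
    towerPerm τ hd ⟨v, i, i.lt_succ_self.trans hi⟩ = ⟨v, i + 1, hi⟩ :=
  dif_pos hi

theorem towerPerm_of_eq (τ : Perm V) (hd : ∀ v, 0 < d v) {v : V} {i : Fin (d v)}
    (hi : (i : ℕ) + 1 = d v) : towerPerm τ hd ⟨v, i⟩ = ⟨τ v, 0, hd _⟩ :=
  dif_neg hi.not_lt

theorem towerPerm_sameCycle_zero (τ : Perm V) (hd : ∀ v, 0 < d v) {v : V} {i : ℕ}
    (hi : i < d v) : (towerPerm τ hd).SameCycle ⟨v, 0, hd v⟩ ⟨v, i, hi⟩ := by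
  induction i with
  | zero => exact SameCycle.refl _ _
  | succ i ih =>
    rw [← towerPerm_of_lt τ hd hi]
    exact (ih _).apply_right

theorem towerPerm_sameCycle (τ : Perm V) (hd : ∀ v, 0 < d v) (hτ : ∀ v w, τ.SameCycle v w)
    (x y : Σ v, Fin (d v)) : (towerPerm τ hd).SameCycle x y := by
  let r (v w : V) := (towerPerm τ hd).SameCycle ⟨v, 0, hd v⟩ ⟨w, 0, hd w⟩
  have hr : Equivalence r := (SameCycle.setoid (towerPerm τ hd)).iseqv.comap _
  have hstep (v : V) : r v (τ v) := by
    have htop : (⟨d v - 1, Nat.sub_lt (hd v) one_pos⟩ : Fin (d v)) + 1 = d v :=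
      Nat.sub_add_cancel (hd v)
    have := (towerPerm_sameCycle_zero τ hd (Nat.sub_lt (hd v) one_pos)).apply_right
    rwa [towerPerm_of_eq τ hd htop] at this
  exact ((towerPerm_sameCycle_zero τ hd x.2.2).symm.trans
    (rel_of_sameCycle hr hstep (hτ x.1 y.1))).trans (towerPerm_sameCycle_zero τ hd y.2.2)

end Tower

section TowerSchedule

open Equiv Perm

variable {V : Type*} [DecidableEq V] {G : SimpleGraph V} {σ τ : Perm V} {m : V → V}
  {S : Finset V} {d : V → ℕ} {r : V → ZMod 4}

/-- The position taken in a slot of the tower over a splicing: `v` itself at the bottom over `v`,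
and above that the mate of `v` if `v ∈ S`, and `v` otherwise. -/
def slotPos (m : V → V) (S : Finset V) (x : Σ v, Fin (d v)) : V :=
  if (x.2 : ℕ) = 0 then x.1 else S.piecewise m id x.1

/-- The time modulo four at which a slot is occupied, when `r` gives the times of the bottom
slots. -/
def slotClock (r : V → ZMod 4) (x : Σ v, Fin (d v)) : ZMod 4 :=
  r x.1 + (x.2 : ℕ)

theorem piecewise_involutive (hm : m.Involutive) (hS : ∀ v ∈ S, m v ∈ S) :
    (S.piecewise m id).Involutive := fun v => by
  by_cases hv : v ∈ S
  · simp [hv, hS v hv, hm v]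
  · simp [hv]

theorem slotPos_clock_injective (hm : m.Involutive) (hS : ∀ v ∈ S, m v ∈ S) (hd : ∀ v, d v ≤ 4)
    (hdS : ∀ v ∈ S, d v = 2) (hrS : ∀ v ∈ S, r (m v) = r v + 2) {x y : Σ v, Fin (d v)}
    (hpos : slotPos m S x = slotPos m S y) (hclock : slotClock r x = slotClock r y) : x = y := by
  obtain ⟨v, i, hi⟩ := x
  obtain ⟨w, j, hj⟩ := y
  have hbottom {v w : V} {j : ℕ} (hj : j < d w) (hj₀ : j ≠ 0) (hvw : v = S.piecewise m id w)
      (hr : r v = r w + j) : v = w := by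
    by_cases hw : w ∈ S
    · obtain rfl : j = 1 := by
        rw [hdS w hw] at hj
        lia
      rw [hvw, S.piecewise_eq_of_mem m id hw, hrS w hw] at hr
      exact absurd (add_left_cancel hr) (by decide)
    · rwa [S.piecewise_eq_of_notMem m id hw] at hvw
  obtain rfl : v = w := by
    simp only [slotPos, slotClock] at hpos hclock
    split_ifs at hpos with hi₀ hj₀ hj₀
    · exact hpos
    · exact hbottom hj hj₀ hpos (by simpa [hi₀] using hclock)
    · exact (hbottom hi hi₀ hpos.symm (by simpa [hj₀] using hclock.symm)).symm
    · exact (piecewise_involutive hm hS).injective hpos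
  have hij := (ZMod.natCast_eq_natCast_iff' i j 4).1 (add_left_cancel hclock)
  have hd4 := hd v
  exact sigma_fin_eq_iff.2 ⟨rfl, by dsimp only; lia⟩

variable [Finite V]

theorem slotPos_towerPerm (h : IsSplicing σ m S τ) (hm : m.Involutive) (hd : ∀ v, 0 < d v)
    (hdS : ∀ v ∈ S, d v = 2) (r : V → ZMod 4) (x : Σ v, Fin (d v)) :
    slotPos m S x = slotPos m S (towerPerm τ hd x) ∨
    (slotPos m S x ∈ S ∧ slotClock r x = r (slotPos m S x) ∧
      slotPos m S (towerPerm τ hd x) = m (slotPos m S x)) ∨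
    slotPos m S (towerPerm τ hd x) = σ (slotPos m S x) := by
  obtain ⟨v, i, hi⟩ := x
  rcases (Nat.add_one_le_of_lt hi).lt_or_eq with htop | htop
  · rw [towerPerm_of_lt τ hd htop]
    by_cases hi₀ : i = 0
    · by_cases hv : v ∈ S
      · exact Or.inr (Or.inl (by simp [slotPos, slotClock, hi₀, hv]))
      · exact Or.inl (by simp [slotPos, hv])
    · exact Or.inl (by simp [slotPos, hi₀])
  · rw [towerPerm_of_eq τ hd htop]
    have htopPos : slotPos m S ⟨v, i, hi⟩ = S.piecewise m id v := by
      by_cases hi₀ : i = 0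
      · have hv : v ∉ S := fun hv => by
          rw [hdS v hv] at htop
          lia
        simp [slotPos, hv]
      · simp [slotPos, hi₀]
    rw [htopPos, ← h.apply_eq hm]
    exact Or.inr (Or.inr (by simp [slotPos]))

theorem slotPos_eq_of_cross (hm : IsCubicDecomposition G σ m) (h : IsSplicing σ m S τ)
    (hd : ∀ v, 0 < d v) (hdS : ∀ v ∈ S, d v = 2) (hrS : ∀ v ∈ S, r (m v) = r v + 2)
    {x y : Σ v, Fin (d v)} (hclock : slotClock r x = slotClock r y)
    (hxy : slotPos m S x = slotPos m S (towerPerm τ hd y))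
    (hyx : slotPos m S (towerPerm τ hd x) = slotPos m S y) :
    slotPos m S x = slotPos m S (towerPerm τ hd x) := by
  have hstep := slotPos_towerPerm h hm.mate_involutive hd hdS r
  rcases hstep x with hx | ⟨hxS, hxr, hx⟩ | hx
  · exact hx
  all_goals
    rw [hyx] at hx
    rcases hstep y with hy | ⟨hyS, hyr, hy⟩ | hy
    · exact hxy.trans (hy.symm.trans hyx.symm)
    all_goals rw [← hxy] at hy
  · rw [hxr, hyr, hx, hrS _ hxS, left_eq_add] at hclock
    exact absurd hclock (by decide)
  · exact absurd ((congrArg m hx).trans ((hm.mate_involutive _).trans hy)) (hm.mate_ne_next _)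
  · exact absurd ((congrArg m hy).trans ((hm.mate_involutive _).trans hx)) (hm.mate_ne_next _)
  · exact absurd ((congrArg σ hx).symm.trans hy.symm) (hm.next_next_ne _)

theorem isSchedule_tower (hm : IsCubicDecomposition G σ m) (h : IsSplicing σ m S τ)
    (hτ : ∀ v w, τ.SameCycle v w) (hd : ∀ v, 0 < d v) (hd4 : ∀ v, d v ≤ 4)
    (hdS : ∀ v ∈ S, d v = 2) (hr : ∀ v, r (τ v) = r v + d v) (hrS : ∀ v ∈ S, r (m v) = r v + 2) :
    IsSchedule G 4 (towerPerm τ hd) (slotPos m S) (slotClock r) where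
  sameCycle := towerPerm_sameCycle τ hd hτ
  clock_next := fun ⟨v, i, hi⟩ => by
    rcases (Nat.add_one_le_of_lt hi).lt_or_eq with htop | htop
    · rw [towerPerm_of_lt τ hd htop]
      simp [slotClock, add_assoc]
    · rw [towerPerm_of_eq τ hd htop]
      simp [slotClock, add_assoc, hr, ← htop]
  surjective_pos v := ⟨⟨v, 0, hd v⟩, by simp [slotPos]⟩
  eq_or_adj x := by
    rcases slotPos_towerPerm h hm.mate_involutive hd hdS r x with hx | ⟨-, -, hx⟩ | hx
    · exact Or.inl hx
    · exact Or.inr (hx ▸ hm.adj_mate _)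
    · exact Or.inr (hx ▸ hm.adj_next _)
  eq_of_pos_eq hclock hpos := slotPos_clock_injective hm.mate_involutive
    (fun _ => h.mate_mem hm.mate_involutive) hd4 hdS hrS hpos hclock
  eq_next_of_cross := slotPos_eq_of_cross hm h hd hdS hrS

end TowerSchedule

section Assembly

open Equiv Perm

variable {V : Type*} {σ τ : Perm V} {m : V → V} {S : Finset V}

namespace IsSplicing

variable [DecidableEq V]

theorem cycleCount_eq_one_or_forall_exists_mem [Finite V] (h : IsSplicing σ m S τ)
    (hm : m.Involutive) (hτ : ∀ v w, τ.SameCycle v w) :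
    cycleCount σ = 1 ∨ ∀ q : Quotient (SameCycle.setoid σ), ∃ v ∈ S, ⟦v⟧ = q := by
  by_contra! hcon
  obtain ⟨hone, q, hq⟩ := hcon
  let s : Set V := {v | ⟦v⟧ = q}
  have hmaps : Set.MapsTo τ s s := fun v hv => by
    rw [h.apply_eq hm, S.piecewise_eq_of_notMem m id fun hvS => hq v hvS hv]
    exact (isCycleOn_sameCycle_fiber q).1.mapsTo hv
  have hall (v : V) : ⟦v⟧ = q := by
    obtain ⟨n, rfl⟩ := (hτ q.out v).exists_nat_pow_eq
    exact hmaps.perm_pow n (Quotient.out_eq q)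
  have : Unique (Quotient (SameCycle.setoid σ)) := ⟨⟨q⟩, Quotient.ind hall⟩
  exact hone Nat.card_unique

variable [Fintype V] [DecidableEq (Quotient (SameCycle.setoid σ))]

theorem two_mul_sum_ceilDiv_le [Nonempty V] [Fintype (Quotient (SameCycle.setoid σ))]
    (h : IsSplicing σ m S τ) (hm : m.Involutive) (hτ : ∀ v w, τ.SameCycle v w)
    (hσ : ∀ v, ∀ i ∈ Finset.Icc 1 3, (σ ^ i) v ≠ v) :
    2 * ∑ q : Quotient (SameCycle.setoid σ), ({v ∈ Sᶜ | ⟦v⟧ = q} : Finset V).card ⌈/⌉ 4 ≤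
      Sᶜ.card := by
  have hpos : 0 < cycleCount τ :=
    have : Nonempty (Quotient (SameCycle.setoid τ)) := ‹Nonempty V›.map (⟦·⟧)
    Nat.card_pos
  have hcount : cycleCount σ = Fintype.card (Quotient (SameCycle.setoid σ)) :=
    Nat.card_eq_fintype_card
  have hcard := h.card_add_le
  refine two_mul_sum_ceilDiv_card_fiber_le (fun v => ⟦v⟧) S (lt_card_sameCycle_fiber hσ)
    (by lia) ?_
  exact hcount ▸ h.cycleCount_eq_one_or_forall_exists_mem hm hτ

theorem exists_heights [Nonempty V] (h : IsSplicing σ m S τ) (hm : m.Involutive)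
    (hne : ∀ v, m v ≠ v) (hτ : ∀ v w, τ.SameCycle v w)
    (hσ : ∀ v, ∀ i ∈ Finset.Icc 1 3, (σ ^ i) v ≠ v) :
    ∃ d : V → ℕ, (∀ v, 0 < d v ∧ d v ≤ 4) ∧ (∀ v ∈ S, d v = 2) ∧
      (∀ q : Quotient (SameCycle.setoid σ), 4 ∣ ∑ v ∈ Sᶜ with ⟦v⟧ = q, d v) ∧
      ∑ v, d v = 2 * Fintype.card V := by
  have : Fintype (Quotient (SameCycle.setoid σ)) := .ofFinite _
  have heven : Even Sᶜ.card := even_card_of_involutive hm (fun v _ => hne v) fun v hv => by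
    simp only [Finset.mem_compl] at hv ⊢
    exact fun hmv => hv (hm v ▸ h.mate_mem hm hmv)
  have hceil := h.two_mul_sum_ceilDiv_le hm hτ hσ
  obtain ⟨w, hw, hdvd, hsum⟩ := exists_weights_dvd_sum_fiber (s := Sᶜ) (N := Sᶜ.card / 2)
    (fun v => (⟦v⟧ : Quotient (SameCycle.setoid σ))) four_pos (by lia) (Nat.div_le_self _ _)
  refine ⟨S.piecewise 2 w, fun v => ?_, fun v hv => by simp [hv], fun q => ?_, ?_⟩
  · by_cases hv : v ∈ S
    · simp [hv]
    · simpa [hv] using hw v (Finset.mem_compl.2 hv)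
  · convert hdvd q using 1
    exact Finset.sum_congr rfl fun v hv => by simp_all
  · rw [Finset.sum_piecewise]
    have hdiv : 2 * (Sᶜ.card / 2) = Sᶜ.card := Nat.two_mul_div_two_of_even heven
    have hcard := Finset.card_add_card_compl S
    simp only [Finset.univ_inter, ← Finset.compl_eq_univ_sdiff, hsum, Pi.ofNat_apply,
      Finset.sum_const, smul_eq_mul]
    lia

theorem exists_clock (h : IsSplicing σ m S τ) (hm : m.Involutive) {d : V → ℕ}
    (hdS : ∀ v ∈ S, d v = 2)
    (hd : ∀ q : Quotient (SameCycle.setoid σ), 4 ∣ ∑ v ∈ Sᶜ with ⟦v⟧ = q, d v) :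
    ∃ r : V → ZMod 4, (∀ v, r (τ v) = r v + d v) ∧ ∀ v ∈ S, r (m v) = r v + 2 := by
  let o : V → ZMod 4 := S.piecewise 0 fun v => d v
  have ho (q : Quotient (SameCycle.setoid σ)) : ∑ v with ⟦v⟧ = q, o v = 0 := by
    have hsum : ∑ v with ⟦v⟧ = q, o v = ((∑ v ∈ Sᶜ with ⟦v⟧ = q, d v : ℕ) : ZMod 4) := by
      simp only [Finset.sum_filter, o, Nat.cast_sum, ← Finset.sum_compl_add_sum S]
      rw [Finset.sum_eq_zero (s := S) fun v hv => by simp [hv], add_zero]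
      exact Finset.sum_congr rfl fun v hv => by simp_all
    rw [hsum, (ZMod.natCast_eq_zero_iff _ _).2 (hd q)]
  obtain ⟨r₀, hr₀⟩ := exists_potential_of_sum_fiber_eq_zero ho
  obtain ⟨r, hr, hrS⟩ := h.exists_potential hm (c := (2 : ZMod 4)) (by decide) r₀
  refine ⟨r, fun v => ?_, hrS⟩
  have hrσ (v : V) : r (σ v) = r v + o v := by
    rw [← sub_eq_iff_eq_add', hr, hr₀, add_sub_cancel_left]
  rw [h.apply_eq hm, hrσ]
  by_cases hv : v ∈ S
  · simp [o, hv, h.mate_mem hm hv, hrS, hdS]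
  · simp [o, hv]

end IsSplicing

end Assembly

theorem stmt9_general {V : Type*} [Fintype V] [Nonempty V] (G : SimpleGraph V) [DecidableRel G.Adj]
    (hreg : ∀ v : V, G.degree v = 3) (h2ec : G.IsEdgeConnected 2) :
    ∃ a : Fin (Fintype.card V / 2) → ℕ → V,
      FeasibleAgency G (Fintype.card V / 2) (2 * Fintype.card V) a := by
  classical
  obtain ⟨σ, m, hm, h3⟩ := exists_isCubicDecomposition_apply_apply_apply_ne hreg h2ec
  have hinv := hm.mate_involutive
  obtain ⟨S, τ, h, hτ⟩ :=
    exists_isSplicing_forall_sameCycle (h2ec.preconnected two_ne_zero) hm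
  obtain ⟨d, hd, hdS, hdvd, hsum⟩ := h.exists_heights hinv (fun v => (hm.adj_mate v).ne') hτ
    fun v i hi => by
      obtain rfl | rfl | rfl : i = 1 ∨ i = 2 ∨ i = 3 := by
        rw [Finset.mem_Icc] at hi
        lia
      exacts [(hm.adj_next v).ne', hm.next_next_ne v, h3 v]
  obtain ⟨r, hr, hrS⟩ := h.exists_clock hinv hdS hdvd
  have hsched := isSchedule_tower hm h hτ (fun v => (hd v).1) (fun v => (hd v).2) hdS hr hrS
  have hcard : Fintype.card (Σ v, Fin (d v)) = 2 * Fintype.card V := by simp [hsum]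
  have : Nonempty (Σ v, Fin (d v)) := ‹Nonempty V›.map fun v => ⟨v, 0, (hd v).1⟩
  rw [← hcard]
  exact hsched.exists_feasibleAgency four_pos (by lia)

/-- a 3-regular 3-edge-connected graph on `n` vertices admits a
feasible agency with time horizon `T = 2n` and `k = n/2` agents. -/
theorem stmt9 {V : Type*} [Fintype V] (G : SimpleGraph V) [DecidableRel G.Adj]
    (hreg : ∀ v : V, G.degree v = 3)
    (h3ec : ∀ s : Finset (Sym2 V), s.card ≤ 2 → (G.deleteEdges ↑s).Connected) :
    ∃ a : Fin (Fintype.card V / 2) → ℕ → V,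
      FeasibleAgency G (Fintype.card V / 2) (2 * Fintype.card V) a := by
  classical
  have : Nonempty V := (h3ec ∅ (by simp)).nonempty
  exact stmt9_general G hreg (isEdgeConnected_two.2 fun e => by
    simpa using (h3ec {e} (by simp)).preconnected)
end

section
/- Let G be a finite simple graph on n ≥ 2 vertices. There exists a feasible agency (with parking) in G with k = n agents and some time horizon T if and only if G is 2-edge-connected, i.e. G is connected and has no cut edge. -/
open SimpleGraph

/-! Placements of the agents on distinct vertices form a graph, whose edges are the crash-free time
steps: these are reversible. A closed walk in it along which every agent sees every vertex is a
feasible agency. If `G` is connected without bridges, every edge `uv` lies on a cycle, and rotating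
that cycle by one position is a crash-free step carrying an agent from `u` to `v`. Hence every agent
can be brought anywhere, and a closed walk through all reachable placements is a feasible agency.

Conversely, when all vertices are occupied, the number of agents on one side of a bridge never
changes. An agent crossing the bridge would thus have to be matched by another one crossing it in
the opposite direction at the same time, which is a crash. So no agent ever crosses a bridge. -/

open Function

section Permutations

variable {α : Type*} [DecidableEq α] {l : List α} {x : α}

theorem eq_getLast_or_rel_formPerm_of_isChain {r : α → α → Prop} (hl : l.Nodup) (hr : l.IsChain r)
    (hx : x ∈ l) : x = l.getLast (List.ne_nil_of_mem hx) ∨ r x (l.formPerm x) := by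
  obtain ⟨i, hi, rfl⟩ := List.getElem_of_mem hx
  rcases Nat.lt_or_ge (i + 1) l.length with hi' | hi'
  · right
    rw [List.formPerm_apply_lt_getElem l hl i hi']
    exact List.isChain_iff_getElem.1 hr i hi'
  · left
    rw [List.getLast_eq_getElem]
    congr 1
    omega

theorem formPerm_formPerm_apply_ne (hl : l.Nodup) (hlen : 2 < l.length) (hx : x ∈ l) :
    l.formPerm (l.formPerm x) ≠ x := by
  intro hfix
  have hcycle : l.formPerm.IsCycleOn (l.toFinset : Set α) := by
    simpa only [List.coe_toFinset] using hl.isCycleOn_formPerm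
  have hdvd : l.toFinset.card ∣ 2 := (hcycle.pow_apply_eq (List.mem_toFinset.2 hx)).1 hfix
  rw [List.toFinset_card_of_nodup hl] at hdvd
  exact hlen.not_ge (Nat.le_of_dvd two_pos hdvd)

end Permutations

theorem exists_notMem_mem_of_bijective {ι V : Type*} {c d : ι → V} (hc : Bijective c)
    (hd : Bijective d) {K : Set V} (hK : K.Finite) {i : ι} (hci : c i ∈ K) (hdi : d i ∉ K) :
    ∃ j, c j ∉ K ∧ d j ∈ K := by
  by_contra! hdK
  have : Finite {x // x ∈ K} := hK
  let σ : Equiv.Perm V := (Equiv.ofBijective d hd).symm.trans (Equiv.ofBijective c hc)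
  have hσ (j) : σ (d j) = c j := congrArg c (Equiv.ofBijective_symm_apply_apply d hd j)
  have hσK (x) (hx : x ∈ K) : σ x ∈ K := by
    obtain ⟨j, rfl⟩ := hd.surjective x
    rw [hσ]
    by_contra hcj
    exact hdK j hcj hx
  have hσ_symm : σ.symm (c i) = d i := by rw [← hσ, Equiv.symm_apply_apply]
  exact hdi (hσ_symm ▸ Equiv.Perm.perm_symm_on_of_perm_on_finite hσK hci)

theorem exists_closed_walk_forall_reachable_mem_support {V : Type*} [Finite V]
    (G : SimpleGraph V) (u : V) : ∃ p : G.Walk u u, ∀ v, G.Reachable u v → v ∈ p.support := by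
  classical
  suffices h : ∀ s : Finset V, ∃ p : G.Walk u u, ∀ v ∈ s, G.Reachable u v → v ∈ p.support by
    have := Fintype.ofFinite V
    simpa using h Finset.univ
  intro s
  induction s using Finset.induction_on with
  | empty => exact ⟨.nil, by simp⟩
  | insert w s _ ih =>
    obtain ⟨p, hp⟩ := ih
    by_cases hw : G.Reachable u w
    · obtain ⟨q⟩ := hw
      refine ⟨p.append (q.append q.reverse), fun v hv hreach ↦ ?_⟩
      simp only [Walk.mem_support_append_iff]
      rcases Finset.mem_insert.1 hv with rfl | hvs
      · exact .inr (.inl q.end_mem_support)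
      · exact .inl (hp v hvs hreach)
    · refine ⟨p, fun v hv hreach ↦ hp v ?_ hreach⟩
      exact (Finset.mem_insert.1 hv).resolve_left (by rintro rfl; exact hw hreach)

theorem isEdgeConnected_two_iff_connected_and_not_isBridge {V : Type*} [Nonempty V]
    {G : SimpleGraph V} :
    G.IsEdgeConnected 2 ↔ G.Connected ∧ ∀ e : Sym2 V, ¬ G.IsBridge e := by
  constructor
  · exact fun h ↦ ⟨h.connected two_ne_zero,
      Sym2.ind fun u v hbridge ↦ hbridge.not_isEdgeReachable_two (h u v)⟩
  · rintro ⟨hconn, hbridge⟩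
    exact isEdgeConnected_two.2 <| Sym2.ind fun u v ↦
      (hconn.connected_delete_edge_of_not_isBridge (hbridge s(u, v))).preconnected

/-- One time step in which the agents `i : ι` move from the positions `c i` to the positions `d i`:
each agent parks or traverses an edge, and no two agents traverse an edge in opposite directions.
Crashes in nodes are not excluded here; they are excluded by injectivity of `c` and `d`. -/
structure CrashFreeStep {ι V : Type*} (G : SimpleGraph V) (c d : ι → V) : Prop where
  eq_or_adj (i : ι) : c i = d i ∨ G.Adj (c i) (d i)
  eq_of_swap (i j : ι) : c i = d j → d i = c j → c i = d i

namespace CrashFreeStep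

variable {ι κ V : Type*} {G : SimpleGraph V} {c d : ι → V}

theorem symm (h : CrashFreeStep G c d) : CrashFreeStep G d c where
  eq_or_adj i := (h.eq_or_adj i).imp Eq.symm Adj.symm
  eq_of_swap i j hdc hcd := (h.eq_of_swap i j hcd hdc).symm

theorem comp (h : CrashFreeStep G c d) (f : κ → ι) : CrashFreeStep G (c ∘ f) (d ∘ f) where
  eq_or_adj i := h.eq_or_adj (f i)
  eq_of_swap i j := h.eq_of_swap (f i) (f j)

theorem isEdgeReachable_two [Finite V] (h : CrashFreeStep G c d) (hc : Bijective c)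
    (hd : Bijective d) (i : ι) : G.IsEdgeReachable 2 (c i) (d i) := by
  rw [SimpleGraph.isEdgeReachable_two]
  intro e
  by_contra hi
  have edge_eq (j) (hj : ¬ (G.deleteEdges {e}).Reachable (c j) (d j)) : s(c j, d j) = e := by
    rcases h.eq_or_adj j with hpark | hadj
    · exact absurd (hpark ▸ .rfl) hj
    · by_contra hne
      exact hj (deleteEdges_adj.2 ⟨hadj, hne⟩).reachable
  obtain ⟨j, hcj, hdj⟩ : ∃ j, ¬ (G.deleteEdges {e}).Reachable (c i) (c j) ∧
      (G.deleteEdges {e}).Reachable (c i) (d j) :=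
    exists_notMem_mem_of_bijective (K := {x | (G.deleteEdges {e}).Reachable (c i) x}) hc hd
      (Set.toFinite _) (Reachable.refl _) hi
  have hsame : s(c i, d i) = s(c j, d j) :=
    (edge_eq i hi).trans (edge_eq j fun hj ↦ hcj (hdj.trans hj.symm)).symm
  rcases Sym2.eq_iff.1 hsame with ⟨hcc, -⟩ | ⟨hcd, hdc⟩
  · exact hcj (hcc ▸ .rfl)
  · exact hi (h.eq_of_swap i j hcd hdc ▸ .rfl)

end CrashFreeStep

section Rotation

variable {V : Type*} {G : SimpleGraph V} {u v : V}

theorem formPerm_support_apply_end [DecidableEq V] (p : G.Walk v u) :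
    p.support.formPerm u = v := by
  have h := List.formPerm_apply_getLast v p.support.tail
  simpa only [p.cons_tail_support, p.getLast_support] using h

theorem crashFreeStep_formPerm_support [DecidableEq V] {p : G.Walk v u} {huv : G.Adj u v}
    (hcycle : (Walk.cons huv p).IsCycle) : CrashFreeStep G id p.support.formPerm := by
  have hnodup : p.support.Nodup := ((Walk.cons_isCycle_iff p huv).1 hcycle).1.support_nodup
  have hlen : 2 < p.support.length := by
    rw [p.length_support]
    exact hcycle.three_le_length
  refine ⟨fun x ↦ ?_, fun x y hxy hyx ↦ ?_⟩
  · by_cases hx : x ∈ p.support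
    · right
      rcases eq_getLast_or_rel_formPerm_of_isChain hnodup p.isChain_adj_support hx with hlast | hadj
      · obtain rfl : x = u := hlast.trans p.getLast_support
        rwa [formPerm_support_apply_end]
      · exact hadj
    · exact .inl (List.formPerm_apply_of_notMem hx).symm
  · have hfix : p.support.formPerm (p.support.formPerm x) = x := by
      rw [hyx]
      exact hxy.symm
    by_contra hmoved
    have hx : x ∈ p.support := List.mem_of_formPerm_apply_ne (Ne.symm hmoved)
    exact formPerm_formPerm_apply_ne hnodup hlen hx hfix

theorem exists_perm_crashFreeStep_apply_eq (huv : G.Adj u v) (hbridge : ¬ G.IsBridge s(u, v)) :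
    ∃ σ : Equiv.Perm V, CrashFreeStep G id σ ∧ σ u = v := by
  classical
  obtain ⟨p, hp⟩ : ∃ p : G.Walk v u, s(v, u) ∉ p.edges := by
    rwa [Sym2.eq_swap, isBridge_iff_forall_walk_mem_edges, not_forall] at hbridge
  have hcycle : (Walk.cons huv p.bypass).IsCycle :=
    (Walk.cons_isCycle_iff _ _).2 ⟨p.bypass_isPath, fun he ↦
      hp (Sym2.eq_swap ▸ p.edges_bypass_subset_edges he)⟩
  exact ⟨_, crashFreeStep_formPerm_support hcycle, formPerm_support_apply_end _⟩

end Rotation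

/-- The graph whose vertices are the placements of the agents `ι` on distinct vertices of `G`, two
placements being adjacent when the agents can pass from one to the other in one time step. -/
def configurationGraph {V : Type*} (G : SimpleGraph V) (ι : Type*) : SimpleGraph (ι ↪ V) where
  Adj c d := c ≠ d ∧ CrashFreeStep G c d
  symm := ⟨fun _ _ h ↦ ⟨h.1.symm, h.2.symm⟩⟩
  loopless := ⟨fun _ h ↦ h.1 rfl⟩

section Configurations

variable {V ι : Type*} {G : SimpleGraph V}

theorem exists_configurationGraph_reachable_of_adj {i : ι} {c : ι ↪ V} {v : V}
    (hadj : G.Adj (c i) v) (hbridge : ¬ G.IsBridge s(c i, v)) :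
    ∃ d, (configurationGraph G ι).Reachable c d ∧ d i = v := by
  obtain ⟨σ, hσ, hσv⟩ := exists_perm_crashFreeStep_apply_eq hadj hbridge
  let d : ι ↪ V := c.trans σ.toEmbedding
  have hdv : d i = v := hσv
  have hne : c ≠ d := fun hcd ↦ hadj.ne (by rw [← hdv, ← hcd])
  exact ⟨d, Adj.reachable ⟨hne, hσ.comp c⟩, hdv⟩

theorem exists_configurationGraph_reachable_apply_eq (hG : G.IsEdgeConnected 2) (c : ι ↪ V)
    (i : ι) (v : V) : ∃ d, (configurationGraph G ι).Reachable c d ∧ d i = v := by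
  obtain ⟨p⟩ := hG.preconnected two_ne_zero (c i) v
  generalize hu : c i = u at p
  induction p generalizing c with
  | nil => exact ⟨c, .rfl, hu⟩
  | cons huw _ ih =>
    subst hu
    obtain ⟨d, hcd, hdw⟩ := exists_configurationGraph_reachable_of_adj huw
      fun hbridge ↦ hbridge.not_isEdgeReachable_two (hG _ _)
    obtain ⟨e, hde, hev⟩ := ih d hdw
    exact ⟨e, hcd.trans hde, hev⟩

theorem feasibleAgency_getVert {k : ℕ} {c : Fin k ↪ V} (p : (configurationGraph G (Fin k)).Walk c c)
    (hp : ∀ i v, ∃ d ∈ p.support, d i = v) :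
    FeasibleAgency G k p.length (fun i t ↦ p.getVert t i) := by
  have hstep (t) (ht : t < p.length) : CrashFreeStep G (p.getVert t) (p.getVert (t + 1)) :=
    (p.adj_getVert_succ ht).2
  refine ⟨fun i ↦ ⟨fun t ht ↦ (hstep t ht).eq_or_adj i, fun v ↦ ?_, by simp⟩, fun i j hij ↦
    ⟨fun t _ ↦ (p.getVert t).injective.ne hij, fun t ht ⟨hcd, hdc, hmoved⟩ ↦
      hmoved ((hstep t ht).eq_of_swap i j hcd hdc)⟩⟩
  obtain ⟨d, hd, rfl⟩ := hp i v
  obtain ⟨t, rfl, ht⟩ := Walk.mem_support_iff_exists_getVert.1 hd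
  exact ⟨t, ht, rfl⟩

theorem exists_feasibleAgency_of_embedding [Finite V] {k : ℕ} (hG : G.IsEdgeConnected 2)
    (c : Fin k ↪ V) : ∃ T a, FeasibleAgency G k T a := by
  obtain ⟨p, hp⟩ := exists_closed_walk_forall_reachable_mem_support (configurationGraph G (Fin k)) c
  refine ⟨p.length, _, feasibleAgency_getVert p fun i v ↦ ?_⟩
  obtain ⟨d, hcd, hdv⟩ := exists_configurationGraph_reachable_apply_eq hG c i v
  exact ⟨d, hp d hcd, hdv⟩

end Configurations

namespace FeasibleAgency

variable {V : Type*} {G : SimpleGraph V} {k T t : ℕ}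

theorem injective {a : Fin k → ℕ → V} (h : FeasibleAgency G k T a) (ht : t ≤ T) :
    Injective (a · t) := by
  intro i j hij
  by_contra hne
  exact (h.2 i j hne).1 t ht hij

theorem crashFreeStep {a : Fin k → ℕ → V} (h : FeasibleAgency G k T a) (ht : t < T) :
    CrashFreeStep G (a · t) (a · (t + 1)) where
  eq_or_adj i := (h.1 i).1 t ht
  eq_of_swap i j hcd hdc := by
    by_cases hij : i = j
    · subst hij
      exact hcd
    · by_contra hmoved
      exact (h.2 i j hij).2 t ht ⟨hcd, hdc, hmoved⟩

variable [Fintype V] {a : Fin (Fintype.card V) → ℕ → V}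

theorem bijective (h : FeasibleAgency G (Fintype.card V) T a) (ht : t ≤ T) :
    Bijective (a · t) :=
  (Fintype.bijective_iff_injective_and_card _).2 ⟨h.injective ht, Fintype.card_fin _⟩

theorem isEdgeReachable_two (h : FeasibleAgency G (Fintype.card V) T a)
    (i : Fin (Fintype.card V)) (ht : t ≤ T) : G.IsEdgeReachable 2 (a i 0) (a i t) := by
  induction t with
  | zero => exact .rfl
  | succ t ih =>
    exact (ih (Nat.le_of_succ_le ht)).trans
      ((h.crashFreeStep ht).isEdgeReachable_two (h.bijective (Nat.le_of_succ_le ht))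
        (h.bijective ht) i)

theorem isEdgeConnected_two (h : FeasibleAgency G (Fintype.card V) T a) :
    G.IsEdgeConnected 2 := by
  intro u v
  obtain ⟨i, -⟩ := (h.bijective T.zero_le).surjective u
  obtain ⟨t, ht, rfl⟩ := (h.1 i).2.1 u
  obtain ⟨t', ht', rfl⟩ := (h.1 i).2.1 v
  exact (h.isEdgeReachable_two i ht).symm.trans (h.isEdgeReachable_two i ht')

end FeasibleAgency

/-- a graph on `n ≥ 2` vertices admits a feasible agency (with
parking) with `k = n` agents and some time horizon `T` iff it is
2-edge-connected, i.e. connected and without cut edges. -/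
theorem stmt10 {V : Type*} [Fintype V] (G : SimpleGraph V)
    (hn : 2 ≤ Fintype.card V) :
    (∃ T : ℕ, ∃ a : Fin (Fintype.card V) → ℕ → V,
        FeasibleAgency G (Fintype.card V) T a) ↔
      (G.Connected ∧ ∀ e : Sym2 V, ¬ G.IsBridge e) := by
  have : Nonempty V := Fintype.card_pos_iff.1 (two_pos.trans_le hn)
  rw [← isEdgeConnected_two_iff_connected_and_not_isBridge]
  constructor
  · rintro ⟨T, a, h⟩
    exact h.isEdgeConnected_two
  · exact fun hG ↦ exists_feasibleAgency_of_embedding hG (Fintype.equivFin V).symm.toEmbedding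
end

section
/- Let G be a star on n ≥ 3 vertices (one center adjacent to n − 1 leaves, no other edges). Then the maximum integer k such that G admits a feasible agency with k agents and some time horizon T equals n − 2. -/
open SimpleGraph

/-!
Lower bound: number the `k + 1` leaves modulo `k + 1`, where `k = n - 2`. Agent `i` passes through
the center once every `2 * k` time units, going from one leaf to the next, and the agents take turns
at intervals of two time units. Each leaf is then vacated just before the next agent moves to it,
and the center is always left before the next agent enters it.

Upper bound: with at least `n - 1` agents at most one vertex is vacant at any time. Nobody can enter
an occupied leaf, since its occupant could only leave against the traffic on the same edge. So when
an agent leaves its leaf for the center, that leaf becomes the only vacant vertex and stays so until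
the agent goes back: an agent visits at most one leaf.
-/

section LowerBound

variable {V : Type*} {G : SimpleGraph V} {k T : ℕ} {c : V}

theorem AgencyTour.of_periodic {a : ℕ → V} (hper : Function.Periodic a T) (hT : 0 < T)
    (hstep : ∀ t, a t = a (t + 1) ∨ G.Adj (a t) (a (t + 1))) (hsurj : Function.Surjective a) :
    AgencyTour G T a := by
  refine ⟨fun t _ => hstep t, fun v => ?_, hper.eq.symm⟩
  obtain ⟨t, rfl⟩ := hsurj v
  exact ⟨t % T, (Nat.mod_lt t hT).le, hper.map_mod_nat t⟩

/-- The relay schedule on a star with center `c` and leaves `ℓ`: the position at time `t` of agent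
`i < k`, who passes through the center at the times `t ≡ -2 * i` modulo `2 * k` and moves on by one
leaf at each passage. The factor `2` keeps the center vacant every other time unit. -/
def starRelay (c : V) (ℓ : ZMod (k + 1) → V) (i t : ℕ) : V :=
  if 2 * k ∣ t + 2 * i then c else ℓ (i + (t + 2 * i) / (2 * k) : ℕ)

variable {ℓ : ZMod (k + 1) → V} {i j t : ℕ}

theorem starRelay_eq_center_iff (hc : ∀ x, ℓ x ≠ c) :
    starRelay c ℓ i t = c ↔ 2 * k ∣ t + 2 * i := by
  simp [starRelay, hc]

theorem starRelay_periodic (c : V) (ℓ : ZMod (k + 1) → V) (i : ℕ) :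
    Function.Periodic (starRelay c ℓ i) (2 * k * (k + 1)) := by
  intro t
  rcases k.eq_zero_or_pos with rfl | hk
  · simp
  · have hshift : t + 2 * k * (k + 1) + 2 * i = t + 2 * i + 2 * k * (k + 1) := by ring
    have hleaf : ((i + ((t + 2 * i) / (2 * k) + (k + 1)) : ℕ) : ZMod (k + 1)) =
        (i + (t + 2 * i) / (2 * k) : ℕ) := by
      rw [← add_assoc, Nat.cast_add _ (k + 1), ZMod.natCast_self, add_zero]
    rw [starRelay, starRelay, hshift, Nat.add_mul_div_left _ _ (by omega), hleaf]
    simp only [Nat.dvd_add_left (Nat.dvd_mul_right (2 * k) (k + 1))]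

theorem starRelay_eq_succ_or_eq_center (c : V) (ℓ : ZMod (k + 1) → V) (i t : ℕ) :
    starRelay c ℓ i t = starRelay c ℓ i (t + 1) ∨
      starRelay c ℓ i t = c ∨ starRelay c ℓ i (t + 1) = c := by
  by_cases h : 2 * k ∣ t + 2 * i
  · exact .inr (.inl (if_pos h))
  by_cases h' : 2 * k ∣ t + 1 + 2 * i
  · exact .inr (.inr (if_pos h'))
  left
  rw [starRelay, starRelay, if_neg h, if_neg h']
  rw [Nat.add_right_comm] at h' ⊢
  rw [Nat.succ_div_of_not_dvd h']

theorem starRelay_eq_or_adj (hG : G.IsUniversal c) (ℓ : ZMod (k + 1) → V) (i t : ℕ) :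
    starRelay c ℓ i t = starRelay c ℓ i (t + 1) ∨
      G.Adj (starRelay c ℓ i t) (starRelay c ℓ i (t + 1)) := by
  refine or_iff_not_imp_left.2 fun hne => ?_
  rcases (starRelay_eq_succ_or_eq_center c ℓ i t).resolve_left hne with h | h
  · rw [h] at hne ⊢
    exact hG hne
  · rw [h] at hne ⊢
    exact (hG (Ne.symm hne)).symm

theorem starRelay_surjective (hk : 0 < k) (hℓ : ∀ v ≠ c, ∃ x, ℓ x = v) (i : ℕ) :
    Function.Surjective (starRelay c ℓ i) := by
  suffices h : ∀ v, ∃ s ≥ 2 * i, (if 2 * k ∣ s then c else ℓ (i + s / (2 * k) : ℕ)) = v by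
    intro v
    obtain ⟨s, hs, hv⟩ := h v
    exact ⟨s - 2 * i, by rwa [starRelay, Nat.sub_add_cancel hs]⟩
  intro v
  by_cases hv : v = c
  · exact ⟨2 * k * i, by nlinarith, by simp [hv]⟩
  obtain ⟨x, rfl⟩ := hℓ v hv
  let q := (x - (i : ZMod (k + 1))).val + (k + 1) * i
  have hleaf : ((i + q : ℕ) : ZMod (k + 1)) = x := by
    rw [Nat.cast_add, Nat.cast_add, Nat.cast_mul, ZMod.natCast_self, ZMod.natCast_zmod_val,
      zero_mul, add_zero, add_sub_cancel]
  have hndvd : ¬ 2 * k ∣ 2 * k * q + 1 := by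
    rw [Nat.dvd_add_right (Nat.dvd_mul_right _ _), Nat.dvd_one]
    omega
  have hdiv : (2 * k * q + 1) / (2 * k) = q := by
    rw [Nat.mul_add_div (by omega), Nat.div_eq_of_lt (by omega), add_zero]
  refine ⟨2 * k * q + 1, ?_, by rw [if_neg hndvd, hdiv, hleaf]⟩
  have hiq : i ≤ q := le_add_left (Nat.le_mul_of_pos_left i k.succ_pos)
  nlinarith

theorem eq_of_starRelay_leaf_eq (hi : i < k) (hj : j < k)
    (h : ((i + (t + 2 * i) / (2 * k) : ℕ) : ZMod (k + 1)) = (j + (t + 2 * j) / (2 * k) : ℕ)) :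
    i = j := by
  wlog hij : i ≤ j generalizing i j
  · exact (this hj hi h.symm (by omega)).symm
  have hle : (t + 2 * i) / (2 * k) ≤ (t + 2 * j) / (2 * k) := Nat.div_le_div_right (by omega)
  have hle_succ : (t + 2 * j) / (2 * k) ≤ (t + 2 * i) / (2 * k) + 1 := by
    rw [← Nat.add_div_right _ (by omega)]
    exact Nat.div_le_div_right (by omega)
  have heq : i + (t + 2 * i) / (2 * k) = j + (t + 2 * j) / (2 * k) := by
    refine ((ZMod.natCast_eq_natCast_iff _ _ _).1 h).eq_of_abs_lt ?_
    rw [abs_lt]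
    omega
  omega

theorem eq_of_dvd_add_two_mul (hi : i < k) (hj : j < k)
    (h : 2 * k ∣ t + 2 * i) (h' : 2 * k ∣ t + 2 * j) : i = j := by
  have hmod : 2 * i ≡ 2 * j [MOD 2 * k] :=
    .add_left_cancel' t ((Nat.modEq_zero_iff_dvd.2 h).trans (Nat.modEq_zero_iff_dvd.2 h').symm)
  have := hmod.eq_of_lt_of_lt (by omega) (by omega)
  omega

theorem starRelay_left_injOn (hc : ∀ x, ℓ x ≠ c) (hℓ : Function.Injective ℓ) (t : ℕ) :
    Set.InjOn (fun i => starRelay c ℓ i t) (Set.Iio k) := by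
  intro i hi j hj hij
  by_cases h : 2 * k ∣ t + 2 * i <;> by_cases h' : 2 * k ∣ t + 2 * j <;>
    simp only [starRelay, h, h', if_true, if_false] at hij
  · exact eq_of_dvd_add_two_mul hi hj h h'
  · exact (hc _ hij.symm).elim
  · exact (hc _ hij).elim
  · exact eq_of_starRelay_leaf_eq hi hj (hℓ hij)

theorem starRelay_succ_ne_center (hc : ∀ x, ℓ x ≠ c) (hi : starRelay c ℓ i t = c) (j : ℕ) :
    starRelay c ℓ j (t + 1) ≠ c := by
  rw [starRelay_eq_center_iff hc] at hi
  rw [ne_eq, starRelay_eq_center_iff hc]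
  intro hj
  have := dvd_of_mul_right_dvd hi
  have := dvd_of_mul_right_dvd hj
  omega

theorem feasibleAgency_starRelay (hG : G.IsUniversal c) (hc : ∀ x, ℓ x ≠ c)
    (hinj : Function.Injective ℓ) (hsurj : ∀ v ≠ c, ∃ x, ℓ x = v) :
    FeasibleAgency G k (2 * k * (k + 1)) fun i t => starRelay c ℓ i t := by
  refine ⟨fun i => ?_, fun i j hij => ⟨fun t _ h => ?_, ?_⟩⟩
  · have hk : 0 < k := i.pos
    exact .of_periodic (starRelay_periodic c ℓ i) (by positivity) (starRelay_eq_or_adj hG ℓ i)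
      (starRelay_surjective hk hsurj i)
  · exact hij (Fin.ext (starRelay_left_injOn hc hinj t i.isLt j.isLt h))
  · rintro t _ ⟨hi, hj, hne⟩
    rcases (starRelay_eq_succ_or_eq_center c ℓ i t).resolve_left hne with h | h
    · exact starRelay_succ_ne_center hc h j (hi.symm.trans h)
    · exact starRelay_succ_ne_center hc (hj.symm.trans h) i h

theorem exists_feasibleAgency_of_isUniversal [Fintype V] (hG : G.IsUniversal c)
    (hk : Fintype.card V = k + 2) :
    ∃ T, ∃ a : Fin k → ℕ → V, FeasibleAgency G k T a := by
  classical
  have hcard : Fintype.card (ZMod (k + 1)) = Fintype.card {v : V // v ≠ c} := by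
    rw [ZMod.card, Fintype.card_subtype_compl, Fintype.card_subtype_eq, hk]
    rfl
  let e := Fintype.equivOfCardEq hcard
  exact ⟨_, _, feasibleAgency_starRelay (ℓ := fun x => (e x : V)) hG (fun x => (e x).2)
    (Subtype.val_injective.comp e.injective) fun v hv => ⟨e.symm ⟨v, hv⟩, by simp⟩⟩

end LowerBound

section UpperBound

variable {V : Type*} {G : SimpleGraph V} {k T : ℕ} {c l : V}

theorem eq_of_notMem_range_of_card_le {α β : Type*} [Fintype α] [Fintype β] {f : α → β}
    (hf : Function.Injective f) (hcard : Fintype.card β ≤ Fintype.card α + 1) {x y : β}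
    (hx : x ∉ Set.range f) (hy : y ∉ Set.range f) : x = y := by
  classical
  have hvacant : (Finset.univ.image f)ᶜ.card ≤ 1 := by
    rw [Finset.card_compl, Finset.card_image_of_injective _ hf, Finset.card_univ]
    omega
  exact Finset.card_le_one.1 hvacant x (by simpa using hx) y (by simpa using hy)

/-- Leaf `l` of a star with center `c` is reserved for agent `i` at time `t`: the agent is on it, or
is in the center while `l` is vacant. -/
def LeafReserved (a : Fin k → ℕ → V) (c l : V) (i : Fin k) (t : ℕ) : Prop :=
  a i t = l ∨ a i t = c ∧ ∀ j, a j t ≠ l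

namespace FeasibleAgency

variable {a : Fin k → ℕ → V} {i j : Fin k} {s t : ℕ}

theorem injective_s12 (ha : FeasibleAgency G k T a) (ht : t ≤ T) :
    Function.Injective fun i => a i t := by
  intro i j hij
  by_contra hne
  exact (ha.2 i j hne).1 t ht hij

theorem adj_of_ne (ha : FeasibleAgency G k T a) (ht : t < T) (hne : a i t ≠ a i (t + 1)) :
    G.Adj (a i t) (a i (t + 1)) :=
  ((ha.1 i).1 t ht).resolve_left hne

theorem vacant_of_enters_leaf (ha : FeasibleAgency G k T a) (hl : ∀ v, G.Adj l v → v = c)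
    (ht : t < T) (hne : a i t ≠ l) (hi : a i (t + 1) = l) (j : Fin k) : a j t ≠ l := by
  intro hj
  have hij : i ≠ j := by
    rintro rfl
    exact hne hj
  have hit : a i t = c := hl _ (hi ▸ ha.adj_of_ne ht (hi ▸ hne)).symm
  have hmove : a j t ≠ a j (t + 1) := fun hstay =>
    hij (ha.injective_s12 ht (hi.trans (hj.symm.trans hstay)))
  have hjt : a j (t + 1) = c := hl _ (hj ▸ ha.adj_of_ne ht hmove)
  exact (ha.2 i j hij).2 t ht ⟨hit.trans hjt.symm, hi.trans hj.symm, hi ▸ hne⟩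

theorem vacant_of_leaves_leaf (ha : FeasibleAgency G k T a) (hl : ∀ v, G.Adj l v → v = c)
    (ht : t < T) (hi : a i t = l) (hne : a i (t + 1) ≠ l) (j : Fin k) : a j (t + 1) ≠ l := by
  intro hj
  have hjt : a j t ≠ l := by
    intro h
    obtain rfl := ha.injective_s12 ht.le (h.trans hi.symm)
    exact hne hj
  exact ha.vacant_of_enters_leaf hl ht hjt hj i hi

theorem leafReserved_succ [Fintype V] (ha : FeasibleAgency G k T a) (hG : G.IsVertexCover {c})
    (hk : Fintype.card V ≤ k + 1) (hlc : l ≠ c) (ht : t < T) (h : LeafReserved a c l i t) :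
    LeafReserved a c l i (t + 1) := by
  have hleaf : ∀ u ≠ c, ∀ v, G.Adj u v → v = c := fun u hu v huv => (hG huv).resolve_left hu
  rcases h with hi | ⟨hi, hvac⟩
  · refine or_iff_not_imp_left.2 fun hne => ⟨?_, ha.vacant_of_leaves_leaf (hleaf l hlc) ht hi hne⟩
    exact hleaf l hlc _ (hi ▸ ha.adj_of_ne ht (hi ▸ Ne.symm hne))
  by_cases hstay : a i (t + 1) = c
  · refine .inr ⟨hstay, fun j hj => ?_⟩
    have hjt : a j t = c := hleaf l hlc _ (hj ▸ ha.adj_of_ne ht (hj ▸ hvac j)).symm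
    obtain rfl := ha.injective_s12 ht.le (hjt.trans hi.symm)
    exact hlc (hj.symm.trans hstay)
  · have hvac' := ha.vacant_of_enters_leaf (hleaf _ hstay) ht (hi ▸ Ne.symm hstay) rfl
    exact .inl (eq_of_notMem_range_of_card_le (ha.injective_s12 ht.le) (by simpa using hk)
      (by simpa using hvac') (by simpa using hvac))

theorem leafReserved_of_le [Fintype V] (ha : FeasibleAgency G k T a) (hG : G.IsVertexCover {c})
    (hk : Fintype.card V ≤ k + 1) (hlc : l ≠ c) (hs : a i s = l) (hst : s ≤ t) (ht : t ≤ T) :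
    LeafReserved a c l i t := by
  induction t, hst using Nat.le_induction with
  | base => exact .inl hs
  | succ t _ ih => exact ha.leafReserved_succ hG hk hlc ht (ih (by omega))

theorem eq_of_ne_center [Fintype V] (ha : FeasibleAgency G k T a) (hG : G.IsVertexCover {c})
    (hk : Fintype.card V ≤ k + 1) (hs : s ≤ T) (ht : t ≤ T) (hsc : a i s ≠ c) (htc : a i t ≠ c) :
    a i s = a i t := by
  wlog hst : s ≤ t generalizing s t
  · exact (this ht hs htc hsc (by omega)).symm
  rcases ha.leafReserved_of_le hG hk hsc rfl hst ht with h | ⟨h, _⟩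
  · exact h.symm
  · exact (htc h).elim

theorem add_two_le_card [Fintype V] (ha : FeasibleAgency G k T a) (hG : G.IsVertexCover {c})
    (hn : 3 ≤ Fintype.card V) : k + 2 ≤ Fintype.card V := by
  classical
  by_contra! hlt
  let i : Fin k := ⟨0, by omega⟩
  have hleaves : 1 < (Finset.univ.erase c).card := by
    rw [Finset.card_erase_of_mem (Finset.mem_univ c), Finset.card_univ]
    omega
  obtain ⟨x, hx, y, hy, hxy⟩ := Finset.one_lt_card.1 hleaves
  obtain ⟨s, hs, rfl⟩ := (ha.1 i).2.1 x
  obtain ⟨t, ht, rfl⟩ := (ha.1 i).2.1 y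
  exact hxy (ha.eq_of_ne_center hG (by omega) hs ht (Finset.ne_of_mem_erase hx)
    (Finset.ne_of_mem_erase hy))

end FeasibleAgency

end UpperBound

/-- for a star on `n ≥ 3` vertices (a center adjacent to all other
vertices, no other edges), the maximum number of agents in a feasible agency
(over all time horizons) is `n - 2`. -/
theorem stmt12 {V : Type*} [Fintype V] (G : SimpleGraph V)
    (hn : 3 ≤ Fintype.card V)
    (hstar : ∃ c : V, ∀ x y : V,
      G.Adj x y ↔ (x = c ∧ y ≠ c) ∨ (y = c ∧ x ≠ c)) :
    IsGreatest {k : ℕ | ∃ T : ℕ, ∃ a : Fin k → ℕ → V, FeasibleAgency G k T a}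
      (Fintype.card V - 2) := by
  obtain ⟨c, hc⟩ := hstar
  have huniv : G.IsUniversal c := fun v hv => (hc c v).2 (.inl ⟨rfl, hv.symm⟩)
  have hcover : G.IsVertexCover {c} := fun x y hxy => ((hc x y).1 hxy).imp And.left And.left
  constructor
  · exact exists_feasibleAgency_of_isUniversal huniv (by omega)
  · rintro k ⟨T, a, ha⟩
    exact Nat.le_sub_of_add_le (ha.add_two_le_card hcover hn)
end
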